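/- arXiv:1607.01925 — 5 statements merged into one kernel-verified Lean document; each statement's English description precedes it below -/
import Mathlib

section
/- Let 0 < β < 2 and suppose p, q ∈ (0,1/2) with p < q < 1/3 are such that p and q are exactly the solutions of f_0(t) = β in (0,1/2). Set m_0^β = (p,p), m_1^β = (1−2p,p), m_2^β = (p,1−2p), m_3^β = (1/3,1/3), σ_0^β = (q,q), σ_1^β = (1−2q,q), σ_2^β = (q,1−2q), and H_β = F_β(σ_0^β). Let W_β = {x ∈ Ξ° : F_β(x) < H_β} and, for i = 0,1,2,3, let W_β(i) be the connected component of W_β containing m_i^β. Then W_β(0), W_β(1), W_β(2), W_β(3) are pairwise distinct; for 0 ≤ i < j ≤ 2 the closures of W_β(i) and W_β(j) are disjoint; and for each i = 0,1,2 the intersection of the closures of W_β(i) and W_β(3) equals the singleton {σ_i^β}. -/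
/-!
Write `x₀ = 1 - x₁ - x₂`. Then `F_β` is, up to a constant, `Σ φ(xᵢ)` with
`φ(t) = -(3/4) t² + (1/β) t log t`, so it is symmetric in `(x₀, x₁, x₂)` and extends continuously
to the whole plane.

*Separation.* The straight line `{x_i = 1 - 2q}` passes through `σ_i`. On its part in the closed
simplex `F_β ≥ H_β`, with equality only at `σ_i`: the two remaining coordinates are `q ± s`, and the
inequality `(1+u) log (1+u) + (1-u) log (1-u) ≥ u²` together with `β q < 2/3` gives the bound
(`potF_line`). Hence no connected subset of `W_β` crosses one of these three lines, and the
valleys lie in the cells cut out by them: `x_i > 1 - 2q` and `x_j < 1 - 2q` for `j ≠ i` on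
`W_β(i)`, `i ≤ 2`, and all `x_j < 1 - 2q` on `W_β(3)`. A common point of the closures of two
valleys lies on a line on which `F_β ≤ H_β` forces it to be a saddle point.

*The saddles are reached.* On the symmetry axis, `t ↦ F_β(t,t)` has derivative `-(2/β) g(t)` with
`g(t) = log (1-2t) - log t - (3β/2)(1-3t)`. The function `g` vanishes at `p`, `q`, `1/3`, and `g'`
is a quadratic polynomial divided by `t(1-2t) > 0`; by Rolle its two roots separate the zeros of
`g`, so `g < 0` on `(p,q)` and `g > 0` on `(q,1/3)` (`axisSlope_sign`). Thus `F_β < H_β` on the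
axis between `m_i` and `σ_i` and between `σ_i` and the centre, which puts `σ_i` in both closures.
-/

/-- The spin value `v_k = (cos(2πk/3), sin(2πk/3))`. -/
noncomputable def potV (k : ℕ) : ℝ × ℝ :=
  (Real.cos (2 * Real.pi * k / 3), Real.sin (2 * Real.pi * k / 3))

/-- `ψ(x) = (2x₁+x₂−1)v₁ + (x₁+2x₂−1)v₂`. -/
noncomputable def potPsi (x : ℝ × ℝ) : ℝ × ℝ :=
  ((2 * x.1 + x.2 - 1) * (potV 1).1 + (x.1 + 2 * x.2 - 1) * (potV 2).1,
   (2 * x.1 + x.2 - 1) * (potV 1).2 + (x.1 + 2 * x.2 - 1) * (potV 2).2)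

/-- The entropy `S(x) = Σᵢ xᵢ log(3xᵢ)` with `x₀ = 1 − x₁ − x₂`
(the convention `t log t = 0` at `t = 0` holds since `Real.log 0 = 0`). -/
noncomputable def potS (x : ℝ × ℝ) : ℝ :=
  (1 - x.1 - x.2) * Real.log (3 * (1 - x.1 - x.2))
    + x.1 * Real.log (3 * x.1) + x.2 * Real.log (3 * x.2)

/-- The mean-field Potts potential `F_β(x) = −(1/2)|ψ(x)|² + (1/β)S(x)`. -/
noncomputable def potF (β : ℝ) (x : ℝ × ℝ) : ℝ :=
  - (1 / 2) * ((potPsi x).1 ^ 2 + (potPsi x).2 ^ 2) + (1 / β) * potS x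

/-- The open two-dimensional simplex `Ξ°`. -/
def simplexInt : Set (ℝ × ℝ) := {x | 0 < x.1 ∧ 0 < x.2 ∧ x.1 + x.2 < 1}

/-- `f₀(t) = (2/(3(1−3t))) log((1−2t)/t)` for `t ≠ 1/3`, with `f₀(1/3) = 2`. -/
noncomputable def f0 (t : ℝ) : ℝ :=
  if t = 1 / 3 then 2 else 2 / (3 * (1 - 3 * t)) * Real.log ((1 - 2 * t) / t)

/-- The barycentric coordinates `x₀ = 1 - x₁ - x₂`, `x₁`, `x₂` of a point of the plane. -/
def bary (k : Fin 3) (x : ℝ × ℝ) : ℝ := ![1 - x.1 - x.2, x.1, x.2] k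

/-- The potential `F_β` as a symmetric function of the three barycentric coordinates. -/
noncomputable def symF (β a b c : ℝ) : ℝ :=
  -(3 / 4) * (a ^ 2 + b ^ 2 + c ^ 2) + 1 / 4 +
    (1 / β) * (a * Real.log (3 * a) + b * Real.log (3 * b) + c * Real.log (3 * c))

/-- `log (1-2t) - log t - (3β/2)(1-3t)`, which is `-(β/2)` times the derivative of
`t ↦ F_β(t,t)`. -/
noncomputable def axisSlope (β t : ℝ) : ℝ :=
  Real.log (1 - 2 * t) - Real.log t - 3 * β / 2 * (1 - 3 * t)

/-! ### The potential in barycentric coordinates -/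

lemma potPsi_sq (x : ℝ × ℝ) : (potPsi x).1 ^ 2 + (potPsi x).2 ^ 2 =
    (2 * x.1 + x.2 - 1) ^ 2 + (x.1 + 2 * x.2 - 1) ^ 2
      - (2 * x.1 + x.2 - 1) * (x.1 + 2 * x.2 - 1) := by
  have c1 : Real.cos (2 * Real.pi * (1 : ℕ) / 3) = -(1 / 2) := by
    rw [show 2 * Real.pi * (1 : ℕ) / 3 = Real.pi - Real.pi / 3 by push_cast; ring,
      Real.cos_pi_sub, Real.cos_pi_div_three]
  have s1 : Real.sin (2 * Real.pi * (1 : ℕ) / 3) = √3 / 2 := by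
    rw [show 2 * Real.pi * (1 : ℕ) / 3 = Real.pi - Real.pi / 3 by push_cast; ring,
      Real.sin_pi_sub, Real.sin_pi_div_three]
  have c2 : Real.cos (2 * Real.pi * (2 : ℕ) / 3) = -(1 / 2) := by
    rw [show 2 * Real.pi * (2 : ℕ) / 3 = Real.pi / 3 + Real.pi by push_cast; ring,
      Real.cos_add_pi, Real.cos_pi_div_three]
  have s2 : Real.sin (2 * Real.pi * (2 : ℕ) / 3) = -(√3 / 2) := by
    rw [show 2 * Real.pi * (2 : ℕ) / 3 = Real.pi / 3 + Real.pi by push_cast; ring,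
      Real.sin_add_pi, Real.sin_pi_div_three]
  have h3 : √3 ^ 2 = 3 := Real.sq_sqrt (by norm_num)
  simp only [potPsi, potV, c1, c2, s1, s2]
  linear_combination ((x.1 - x.2) ^ 2 / 4) * h3

lemma potF_eq_symF (β : ℝ) (x : ℝ × ℝ) :
    potF β x = symF β (1 - x.1 - x.2) x.1 x.2 := by
  rw [potF, potPsi_sq, symF, potS]
  ring

lemma continuous_mul_log_three : Continuous fun t : ℝ => t * Real.log (3 * t) := by
  have h : Continuous fun t : ℝ => (1 / 3 : ℝ) * ((3 * t) * Real.log (3 * t)) :=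
    (Real.continuous_mul_log.comp (continuous_const.mul continuous_id)).const_mul _
  convert h using 2 with t
  ring

lemma continuous_potF (β : ℝ) : Continuous (potF β) := by
  have h0 : Continuous fun x : ℝ × ℝ => (1 - x.1 - x.2) * Real.log (3 * (1 - x.1 - x.2)) :=
    continuous_mul_log_three.comp (by fun_prop : Continuous fun x : ℝ × ℝ => 1 - x.1 - x.2)
  have h1 : Continuous fun x : ℝ × ℝ => x.1 * Real.log (3 * x.1) :=
    continuous_mul_log_three.comp continuous_fst
  have h2 : Continuous fun x : ℝ × ℝ => x.2 * Real.log (3 * x.2) :=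
    continuous_mul_log_three.comp continuous_snd
  have : potF β = fun x => symF β (1 - x.1 - x.2) x.1 x.2 := funext (potF_eq_symF β)
  rw [this]
  unfold symF
  exact Continuous.add (by fun_prop) (((h0.add h1).add h2).const_mul _)

lemma continuous_bary (k : Fin 3) : Continuous (bary k) := by
  unfold bary
  fin_cases k <;> simp <;> fun_prop

/-! ### The lower bound on the separating lines -/

lemma sq_le_entropy_of_nonneg {u : ℝ} (h0 : 0 ≤ u) (h1 : u ≤ 1) :
    u ^ 2 ≤ (1 + u) * Real.log (1 + u) + (1 - u) * Real.log (1 - u) := by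
  let f : ℝ → ℝ := fun u => (1 + u) * Real.log (1 + u) + (1 - u) * Real.log (1 - u) - u ^ 2
  have hd : ∀ x ∈ Set.Ioo (0 : ℝ) 1,
      HasDerivAt f (Real.log (1 + x) - Real.log (1 - x) - 2 * x) x := by
    intro x hx
    have a1 : HasDerivAt (fun u : ℝ => 1 + u) 1 x := (hasDerivAt_id x).const_add 1
    have a2 : HasDerivAt (fun u : ℝ => 1 - u) (-1) x := (hasDerivAt_id x).const_sub 1
    have n1 : 1 + x ≠ 0 := by linarith [hx.1]
    have n2 : 1 - x ≠ 0 := by linarith [hx.2]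
    have h := ((a1.mul (a1.log n1)).add (a2.mul (a2.log n2))).sub ((hasDerivAt_id x).pow 2)
    refine HasDerivAt.congr_deriv h ?_
    simp
    field_simp
    ring
  have hc : Continuous f := by
    have c1 : Continuous fun u : ℝ => (1 + u) * Real.log (1 + u) :=
      Real.continuous_mul_log.comp (by fun_prop : Continuous fun u : ℝ => 1 + u)
    have c2 : Continuous fun u : ℝ => (1 - u) * Real.log (1 - u) :=
      Real.continuous_mul_log.comp (by fun_prop : Continuous fun u : ℝ => 1 - u)
    exact (c1.add c2).sub (by fun_prop)
  have hm : MonotoneOn f (Set.Icc 0 1) := by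
    refine monotoneOn_of_deriv_nonneg (convex_Icc 0 1) hc.continuousOn ?_ ?_
    · intro x hx
      rw [interior_Icc] at hx
      exact (hd x hx).differentiableAt.differentiableWithinAt
    · intro x hx
      rw [interior_Icc] at hx
      rw [(hd x hx).deriv]
      have hx1 : 0 < 1 - x := by linarith [hx.2]
      -- `log (1 + v) ≥ 2v / (v + 2)` at `v = 2x / (1 - x)`, where `1 + v = (1 + x) / (1 - x)`.
      have h := Real.le_log_one_add_of_nonneg (x := 2 * x / (1 - x))
        (div_nonneg (by linarith [hx.1]) hx1.le)
      have e1 : 1 + 2 * x / (1 - x) = (1 + x) / (1 - x) := by field_simp; ring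
      have e2 : 2 * (2 * x / (1 - x)) / (2 * x / (1 - x) + 2) = 2 * x := by
        field_simp; ring
      rw [e1, e2, Real.log_div (by linarith [hx.1]) hx1.ne'] at h
      linarith
  have h := hm (Set.left_mem_Icc.2 zero_le_one) ⟨h0, h1⟩ h0
  simp only [f] at h
  norm_num at h
  linarith

lemma sq_le_entropy {u : ℝ} (h : |u| ≤ 1) :
    u ^ 2 ≤ (1 + u) * Real.log (1 + u) + (1 - u) * Real.log (1 - u) := by
  rcases le_total 0 u with h0 | h0
  · rw [abs_of_nonneg h0] at h
    exact sq_le_entropy_of_nonneg h0 h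
  · rw [abs_of_nonpos h0] at h
    have := sq_le_entropy_of_nonneg (u := -u) (by linarith) h
    simp only [sub_neg_eq_add, ← sub_eq_add_neg] at this
    linarith [neg_sq u]

/-- With one coordinate fixed at `c` and the other two of sum `2q`, the symmetric point is the
only point where `symF` is at most its value there. -/
lemma eq_of_symF_le {β q a b c : ℝ} (hβ0 : 0 < β) (hβ : β < 2) (hq0 : 0 < q) (hq : q < 1 / 3)
    (ha : 0 ≤ a) (hb : 0 ≤ b) (hab : a + b = 2 * q)
    (h : symF β c a b ≤ symF β c q q) : a = q := by
  obtain ⟨u, rfl⟩ : ∃ u, a = q * (1 + u) := ⟨a / q - 1, by field_simp; ring⟩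
  obtain rfl : b = q * (1 - u) := by linarith
  have hu1 : 0 ≤ 1 + u := nonneg_of_mul_nonneg_right ha hq0
  have hu2 : 0 ≤ 1 - u := nonneg_of_mul_nonneg_right hb hq0
  have key := sq_le_entropy (u := u) (abs_le.2 ⟨by linarith, by linarith⟩)
  -- Also valid at `v = 0`, where both sides vanish.
  have hl : ∀ v : ℝ, v * Real.log (3 * (q * v)) = v * Real.log (3 * q) + v * Real.log v := by
    intro v
    rcases eq_or_ne v 0 with rfl | hv
    · simp
    · rw [← mul_assoc, Real.log_mul (by positivity) hv]; ring
  have e1 := hl (1 + u)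
  have e2 := hl (1 - u)
  set E := (1 + u) * Real.log (1 + u) + (1 - u) * Real.log (1 - u) with hE
  have hsum : q * (1 + u) * Real.log (3 * (q * (1 + u))) +
      q * (1 - u) * Real.log (3 * (q * (1 - u))) = 2 * (q * Real.log (3 * q)) + q * E := by
    rw [hE]; linear_combination q * e1 + q * e2
  have h2 : (1 / β) * (q * E) ≤ 3 / 2 * q ^ 2 * u ^ 2 := by
    unfold symF at h
    have : (1 / β) * (q * (1 + u) * Real.log (3 * (q * (1 + u))) +
      q * (1 - u) * Real.log (3 * (q * (1 - u)))) =
      (1 / β) * (2 * (q * Real.log (3 * q)) + q * E) := by rw [hsum]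
    linarith
  have h3 : q * E ≤ β * (3 / 2 * q ^ 2 * u ^ 2) := by
    rw [one_div, inv_mul_le_iff₀ hβ0] at h2
    exact h2
  have h4 : q * u ^ 2 ≤ q * E := mul_le_mul_of_nonneg_left key hq0.le
  have h5 : 0 < 1 - 3 / 2 * β * q := by nlinarith
  have h6 : (q * (1 - 3 / 2 * β * q)) * u ^ 2 ≤ 0 := by linarith
  have h7 : u ^ 2 ≤ 0 := nonpos_of_mul_nonpos_right h6 (mul_pos hq0 h5)
  have h8 : u = 0 := pow_eq_zero_iff two_ne_zero |>.1 (le_antisymm h7 (sq_nonneg u))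
  rw [h8]; ring

/-- On the line `x_k = 1 - 2q` within the closed simplex, `F_β ≤ H_β` only at the saddle. -/
lemma potF_line {β q : ℝ} (hβ0 : 0 < β) (hβ : β < 2) (hq0 : 0 < q) (hq : q < 1 / 3)
    {x : ℝ × ℝ} (hx : ∀ k, 0 ≤ bary k x) (hF : potF β x ≤ potF β (q, q)) (k : Fin 3)
    (hk : bary k x = 1 - 2 * q) :
    x = (![(q, q), (1 - 2 * q, q), (q, 1 - 2 * q)] : Fin 3 → ℝ × ℝ) k := by
  have x0 := hx 0
  have x1 := hx 1
  have x2 := hx 2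
  obtain ⟨a, b⟩ := x
  rw [potF_eq_symF, potF_eq_symF] at hF
  simp only [bary, symF] at *
  simp at x0 x1 x2
  fin_cases k
  · simp at hk
    have hb : b = 2 * q - a := by linarith
    have := eq_of_symF_le (c := 1 - 2 * q) hβ0 hβ hq0 hq x1 x2 (by linarith) (by
      unfold symF
      rw [hk, show (1 - q - q) = 1 - 2 * q by ring] at hF
      linarith)
    simp; constructor <;> linarith
  · simp at hk
    have := eq_of_symF_le (c := 1 - 2 * q) (a := 1 - a - b) (b := b) hβ0 hβ hq0 hq
      (by linarith) x2 (by linarith) (by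
      unfold symF
      rw [hk, show (1 - q - q) = 1 - 2 * q by ring] at hF
      rw [hk]
      linarith)
    simp; constructor <;> linarith
  · simp at hk
    have := eq_of_symF_le (c := 1 - 2 * q) (a := 1 - a - b) (b := a) hβ0 hβ hq0 hq
      (by linarith) x1 (by linarith) (by
      unfold symF
      rw [hk, show (1 - q - q) = 1 - 2 * q by ring] at hF
      rw [hk]
      linarith)
    simp; constructor <;> linarith

/-! ### The potential on the symmetry axes -/

lemma axisSlope_eq_zero_of_f0 {β t : ℝ} (h0 : 0 < t) (h1 : t < 1 / 3) (h : f0 t = β) :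
    axisSlope β t = 0 := by
  rw [f0, if_neg h1.ne, Real.log_div (by linarith) h0.ne'] at h
  have h3 : 1 - 3 * t ≠ 0 := by linarith
  rw [div_mul_eq_mul_div, div_eq_iff (by simpa using h3)] at h
  rw [axisSlope]
  linarith

lemma hasDerivAt_axisSlope (β : ℝ) {t : ℝ} (h0 : 0 < t) (h1 : t < 1 / 2) :
    HasDerivAt (axisSlope β) ((9 * β / 2 * (t * (1 - 2 * t)) - 1) / (t * (1 - 2 * t))) t := by
  have n1 : 1 - 2 * t ≠ 0 := by linarith
  have a1 : HasDerivAt (fun t : ℝ => 1 - 2 * t) (-(2 * 1)) t :=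
    ((hasDerivAt_id t).const_mul 2).const_sub 1
  have a2 : HasDerivAt (fun t : ℝ => 1 - 3 * t) (-(3 * 1)) t :=
    ((hasDerivAt_id t).const_mul 3).const_sub 1
  have h := ((a1.log n1).sub (Real.hasDerivAt_log h0.ne')).sub (a2.const_mul (3 * β / 2))
  refine HasDerivAt.congr_deriv h ?_
  field_simp
  ring

lemma axisSlope_sign {β p q : ℝ} (hβ0 : 0 < β) (hp0 : 0 < p) (hpq : p < q) (hq : q < 1 / 3)
    (hp : axisSlope β p = 0) (hq' : axisSlope β q = 0) :
    (∀ t ∈ Set.Ioo p q, axisSlope β t < 0) ∧ (∀ t ∈ Set.Ioo q (1 / 3), 0 < axisSlope β t) := by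
  have h3 : axisSlope β (1 / 3) = 0 := by
    unfold axisSlope
    norm_num
  have hcont : ∀ a b : ℝ, 0 < a → b < 1 / 2 → ContinuousOn (axisSlope β) (Set.Icc a b) :=
    fun a b ha hb t ht => (hasDerivAt_axisSlope β (by linarith [ht.1])
      (by linarith [ht.2])).continuousAt.continuousWithinAt
  have hrolle : ∀ a b : ℝ, 0 < a → a < b → b < 1 / 2 → axisSlope β a = 0 → axisSlope β b = 0 →
      ∃ r ∈ Set.Ioo a b, 9 * β / 2 * (r * (1 - 2 * r)) = 1 := by
    intro a b ha hab hb ea eb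
    obtain ⟨r, hr, hr'⟩ := exists_hasDerivAt_eq_zero hab (hcont a b ha hb) (ea.trans eb.symm)
      (fun t ht => hasDerivAt_axisSlope β (by linarith [ht.1]) (by linarith [ht.2]))
    refine ⟨r, hr, ?_⟩
    have hne : r * (1 - 2 * r) ≠ 0 :=
      (mul_pos (by linarith [hr.1]) (by linarith [hr.2])).ne'
    rcases div_eq_zero_iff.1 hr' with h | h
    · linarith
    · exact absurd h hne
  obtain ⟨r, hr, er⟩ := hrolle p q hp0 hpq (by linarith) hp hq'
  obtain ⟨s, hs, es⟩ := hrolle q (1 / 3) (by linarith) hq (by norm_num) hq' h3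
  have hrs : r < s := hr.2.trans hs.1
  -- Vieta: `r` and `s` are the two roots of `t (1 - 2t) = 2 / (9β)`.
  have hsum : r + s = 1 / 2 := by
    have : (9 * β / 2 * (r - s)) * (1 - 2 * (r + s)) = 0 := by linear_combination er - es
    rcases mul_eq_zero.1 this with h | h
    · exact absurd h (mul_neg_of_pos_of_neg (by linarith) (by linarith)).ne
    · linarith
  have hnum : ∀ t, 9 * β / 2 * (t * (1 - 2 * t)) - 1 = 9 * β * ((t - r) * (s - t)) := by
    intro t
    obtain rfl : s = 1 / 2 - r := by linarith
    linear_combination er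
  have hderiv : ∀ t, 0 < t → t < 1 / 2 →
      deriv (axisSlope β) t = 9 * β * ((t - r) * (s - t)) / (t * (1 - 2 * t)) := by
    intro t h0 h1
    rw [(hasDerivAt_axisSlope β h0 h1).deriv, hnum]
  have hanti : ∀ a b : ℝ, 0 < a → b < 1 / 2 → (b ≤ r ∨ s ≤ a) →
      StrictAntiOn (axisSlope β) (Set.Icc a b) := by
    intro a b ha hb hor
    refine strictAntiOn_of_deriv_neg (convex_Icc a b) (hcont a b ha hb) ?_
    intro t ht
    rw [interior_Icc] at ht
    have h0 : 0 < t := by linarith [ht.1]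
    have h1 : t < 1 / 2 := by linarith [ht.2]
    rw [hderiv t h0 h1]
    refine div_neg_of_neg_of_pos (mul_neg_of_pos_of_neg (by linarith) ?_)
      (mul_pos h0 (by linarith))
    rcases hor with h | h
    · exact mul_neg_of_neg_of_pos (by linarith [ht.2]) (by linarith [ht.2])
    · exact mul_neg_of_pos_of_neg (by linarith [ht.1]) (by linarith [ht.1])
  have hmono : StrictMonoOn (axisSlope β) (Set.Icc r s) := by
    refine strictMonoOn_of_deriv_pos (convex_Icc r s)
      (hcont r s (by linarith [hr.1]) (by linarith [hs.2])) ?_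
    intro t ht
    rw [interior_Icc] at ht
    have h0 : 0 < t := by linarith [ht.1, hr.1]
    have h1 : t < 1 / 2 := by linarith [ht.2, hs.2]
    rw [hderiv t h0 h1]
    exact div_pos (mul_pos (by linarith) (mul_pos (by linarith [ht.1]) (by linarith [ht.2])))
      (mul_pos h0 (by linarith))
  have hqm : q ∈ Set.Icc r s := ⟨hr.2.le, hs.1.le⟩
  refine ⟨fun t ht => ?_, fun t ht => ?_⟩
  · rcases le_total t r with h | h
    · rw [← hp]
      exact hanti p r hp0 (by linarith [hr.2]) (Or.inl le_rfl) ⟨le_rfl, hr.1.le⟩ ⟨ht.1.le, h⟩ ht.1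
    · rw [← hq']
      exact hmono ⟨h, by linarith [ht.2, hs.1]⟩ hqm ht.2
  · rcases le_total t s with h | h
    · rw [← hq']
      exact hmono hqm ⟨by linarith [ht.1, hr.2], h⟩ ht.1
    · rw [← h3]
      exact hanti s (1 / 3) (by linarith [hr.1]) (by norm_num) (Or.inr le_rfl) ⟨h, ht.2.le⟩
        ⟨hs.2.le, le_rfl⟩ ht.2

lemma hasDerivAt_potF_axis {β t : ℝ} (hβ : β ≠ 0) (h0 : 0 < t) (h1 : t < 1 / 2) :
    HasDerivAt (fun t => potF β (t, t)) (-(2 / β) * axisSlope β t) t := by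
  have n1 : 3 * (1 - t - t) ≠ 0 := by linarith
  have n2 : 3 * t ≠ 0 := by linarith
  have n3 : 1 - 2 * t ≠ 0 := by linarith
  have a1 : HasDerivAt (fun t : ℝ => 1 - t - t) (-1 - 1) t :=
    ((hasDerivAt_id t).const_sub 1).sub (hasDerivAt_id t)
  have a2 : HasDerivAt (fun t : ℝ => t) 1 t := hasDerivAt_id t
  have l1 := a1.mul ((a1.const_mul 3).log n1)
  have l2 := a2.mul ((a2.const_mul 3).log n2)
  have h := ((((a1.pow 2).add (a2.pow 2)).add (a2.pow 2)).const_mul (-(3 / 4))).add_const (1 / 4)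
    |>.add (((l1.add l2).add l2).const_mul (1 / β))
  have e : (fun t => potF β (t, t)) = fun t => symF β (1 - t - t) t t :=
    funext fun t => potF_eq_symF β (t, t)
  rw [e]
  refine HasDerivAt.congr_deriv h ?_
  rw [axisSlope, show (1 - t - t) = 1 - 2 * t by ring, Real.log_mul (by norm_num) n3,
    Real.log_mul (by norm_num) h0.ne']
  simp
  field_simp
  ring

lemma potF_axis_lt {β p q : ℝ} (hβ0 : 0 < β) (hp0 : 0 < p) (hpq : p < q) (hq : q < 1 / 3)
    (hp : axisSlope β p = 0) (hq' : axisSlope β q = 0) {t : ℝ} (ht : t ∈ Set.Icc p (1 / 3))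
    (htq : t ≠ q) : potF β (t, t) < potF β (q, q) := by
  obtain ⟨hneg, hpos⟩ := axisSlope_sign hβ0 hp0 hpq hq hp hq'
  have hc : Continuous fun t : ℝ => potF β (t, t) :=
    (continuous_potF β).comp (continuous_id.prodMk continuous_id)
  have hd : ∀ t, 0 < t → t < 1 / 2 →
      deriv (fun t => potF β (t, t)) t = -(2 / β) * axisSlope β t := by
    intro t h0 h1
    exact (hasDerivAt_potF_axis hβ0.ne' h0 h1).deriv
  have hb : -(2 / β) < 0 := neg_neg_of_pos (by positivity)
  rcases lt_or_gt_of_ne htq with h | h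
  · have hm : StrictMonoOn (fun t => potF β (t, t)) (Set.Icc p q) := by
      refine strictMonoOn_of_deriv_pos (convex_Icc p q) hc.continuousOn ?_
      intro s hs
      rw [interior_Icc] at hs
      rw [hd s (by linarith [hs.1]) (by linarith [hs.2])]
      exact mul_pos_of_neg_of_neg hb (hneg s hs)
    exact hm ⟨ht.1, h.le⟩ ⟨hpq.le, le_rfl⟩ h
  · have hm : StrictAntiOn (fun t => potF β (t, t)) (Set.Icc q (1 / 3)) := by
      refine strictAntiOn_of_deriv_neg (convex_Icc q (1 / 3)) hc.continuousOn ?_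
      intro s hs
      rw [interior_Icc] at hs
      rw [hd s (by linarith [hs.1]) (by linarith [hs.2])]
      exact mul_neg_of_neg_of_pos hb (hpos s hs)
    exact hm ⟨le_rfl, hq.le⟩ ⟨h.le, ht.2⟩ h

/-- The point with `i`-th barycentric coordinate `1 - 2t` and the two others equal to `t`. -/
def axisPt (i : Fin 3) (t : ℝ) : ℝ × ℝ := ![(t, t), (1 - 2 * t, t), (t, 1 - 2 * t)] i

lemma continuous_axisPt (i : Fin 3) : Continuous (axisPt i) := by
  unfold axisPt
  fin_cases i <;> simp only [Fin.reduceFinMk, Matrix.cons_val] <;> fun_prop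

lemma potF_axisPt (β : ℝ) (i : Fin 3) (t : ℝ) : potF β (axisPt i t) = potF β (t, t) := by
  simp only [potF_eq_symF]
  fin_cases i
  · simp [axisPt]
  · simp [axisPt, symF]
    rw [show 2 * t - t = t by ring, show 1 - t - t = 1 - 2 * t by ring]
    ring
  · simp [axisPt, symF]
    rw [show 2 * t - t = t by ring, show 1 - t - t = 1 - 2 * t by ring]
    ring

lemma axisPt_mem_simplexInt (i : Fin 3) {t : ℝ} (h0 : 0 < t) (h1 : t < 1 / 2) :
    axisPt i t ∈ simplexInt := by
  fin_cases i <;> simp [axisPt, simplexInt] <;> (try constructor) <;> (try constructor) <;> linarith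

lemma bary_axisPt (i k : Fin 3) (t : ℝ) :
    bary k (axisPt i t) = if k = i then 1 - 2 * t else t := by
  fin_cases i <;> fin_cases k <;> simp [bary, axisPt] <;> ring

lemma axisPt_third (i : Fin 3) : axisPt i (1 / 3) = (1 / 3, 1 / 3) := by
  fin_cases i <;> simp [axisPt] <;> norm_num

/-! ### Components of the sublevel set -/

/-- A component of a set on which `f` avoids the value `c` stays on one side of `c`. -/
lemma lt_on_component {X : Type*} [TopologicalSpace X] {A : Set X} {f : X → ℝ} {c : ℝ} {a x : X}
    (hf : Continuous f) (hA : ∀ y ∈ A, f y ≠ c) (ha : a ∈ A)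
    (hx : x ∈ connectedComponentIn A a) (hac : f a < c) : f x < c := by
  by_contra! hcon
  obtain ⟨y, hy, hyc⟩ := isPreconnected_connectedComponentIn.intermediate_value
    (mem_connectedComponentIn ha) hx hf.continuousOn ⟨hac.le, hcon⟩
  exact hA y (connectedComponentIn_subset A a hy) hyc

/-- If `γ` maps the interval `I` into `A`, then it maps the endpoints of `I` into the closure of
the component of `A` containing the image of `I`. -/
lemma mem_closure_component {X : Type*} [TopologicalSpace X] {A : Set X} {γ : ℝ → X}
    (hγ : Continuous γ) {I : Set ℝ} (hI : IsPreconnected I) (hIA : ∀ t ∈ I, γ t ∈ A) {s q : ℝ}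
    (hs : s ∈ I) (hq : q ∈ closure I) : γ q ∈ closure (connectedComponentIn A (γ s)) := by
  have hsub : γ '' I ⊆ connectedComponentIn A (γ s) :=
    (hI.image γ hγ.continuousOn).subset_connectedComponentIn ⟨s, hs, rfl⟩
      (by rintro _ ⟨t, ht, rfl⟩; exact hIA t ht)
  exact closure_mono hsub (image_closure_subset_closure_image hγ ⟨q, hq, rfl⟩)

/-- for `0 < β < 2`, with `p < q < 1/3` the exact solutions of `f₀(t) = β`
in `(0,1/2)`, the four valleys `W_β(i)` are pairwise distinct, the closures of `W_β(i)`
and `W_β(j)` for `0 ≤ i < j ≤ 2` are disjoint, and the closures of `W_β(i)` and `W_β(3)`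
intersect exactly at the saddle point `{σ_i^β}`. -/
theorem potts_valley_structure_intermediate_temperature (β p q : ℝ)
    (hβ0 : 0 < β) (hβ : β < 2)
    (hp0 : 0 < p) (hpq : p < q) (hq : q < 1 / 3)
    (hsol : ∀ t ∈ Set.Ioo (0 : ℝ) (1 / 2), (f0 t = β ↔ t = p ∨ t = q))
    (m : Fin 4 → ℝ × ℝ) (σ : Fin 3 → ℝ × ℝ)
    (hm : m = ![(p, p), (1 - 2 * p, p), (p, 1 - 2 * p), (1 / 3, 1 / 3)])
    (hσ : σ = ![(q, q), (1 - 2 * q, q), (q, 1 - 2 * q)])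
    (W : Fin 4 → Set (ℝ × ℝ))
    (hW : W = fun i =>
      connectedComponentIn {x ∈ simplexInt | potF β x < potF β (q, q)} (m i)) :
    (∀ i j, i ≠ j → W i ≠ W j) ∧
    (∀ i j : Fin 3, i ≠ j →
      closure (W i.castSucc) ∩ closure (W j.castSucc) = ∅) ∧
    (∀ i : Fin 3, closure (W i.castSucc) ∩ closure (W 3) = {σ i}) := by
  have hq0 : 0 < q := hp0.trans hpq
  have zp := axisSlope_eq_zero_of_f0 hp0 (hpq.trans hq)
    ((hsol p ⟨hp0, by linarith⟩).2 (Or.inl rfl))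
  have zq := axisSlope_eq_zero_of_f0 hq0 hq ((hsol q ⟨hq0, by linarith⟩).2 (Or.inr rfl))
  set A : Set (ℝ × ℝ) := {x ∈ simplexInt | potF β x < potF β (q, q)} with hA
  have hσ' : ∀ i, σ i = axisPt i q := fun i => by rw [hσ]; rfl
  have hm' : ∀ i : Fin 3, m i.castSucc = axisPt i p := by
    intro i; rw [hm]; fin_cases i <;> rfl
  have hm3 : ∀ i : Fin 3, m 3 = axisPt i (1 / 3) := by
    intro i; rw [hm, axisPt_third]; rfl
  have hWi : ∀ i, W i = connectedComponentIn A (m i) := fun i => by rw [hW]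
  have haxis : ∀ (i : Fin 3), ∀ t ∈ Set.Icc p (1 / 3), t ≠ q → axisPt i t ∈ A := by
    intro i t ht htq
    refine ⟨axisPt_mem_simplexInt i (by linarith [ht.1]) (by linarith [ht.2]), ?_⟩
    rw [potF_axisPt]
    exact potF_axis_lt hβ0 hp0 hpq hq zp zq ht htq
  have hmA : ∀ i : Fin 3, m i.castSucc ∈ A := fun i => by
    rw [hm']; exact haxis i p ⟨le_rfl, by linarith⟩ hpq.ne
  have hm3A : m 3 ∈ A := by
    rw [hm3 0]; exact haxis 0 _ ⟨by linarith, le_rfl⟩ hq.ne'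
  have hnn : ∀ x ∈ A, ∀ k, 0 ≤ bary k x := by
    rintro x ⟨⟨h1, h2, h3⟩, -⟩ k
    fin_cases k <;> simp [bary] <;> linarith
  have hne : ∀ k, ∀ x ∈ A, bary k x ≠ 1 - 2 * q := by
    intro k x hx hk
    have hxk : x = axisPt k q := potF_line hβ0 hβ hq0 hq (hnn x hx) hx.2.le k hk
    have hlt := hx.2
    rw [hxk, potF_axisPt] at hlt
    exact lt_irrefl _ hlt
  -- The cells containing the valleys.
  have hlt : ∀ i : Fin 4, m i ∈ A → ∀ k, bary k (m i) < 1 - 2 * q →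
      ∀ x ∈ W i, bary k x < 1 - 2 * q := by
    intro i hi k hk x hx
    rw [hWi] at hx
    exact lt_on_component (continuous_bary k) (hne k) hi hx hk
  have hown : ∀ i : Fin 3, ∀ x ∈ W i.castSucc, 1 - 2 * q < bary i x := by
    intro i x hx
    rw [hWi] at hx
    have h := lt_on_component (f := fun x => -bary i x) (c := -(1 - 2 * q))
      (continuous_bary i).neg (fun y hy h => hne i y hy (neg_injective h)) (hmA i) hx (by
        rw [hm', bary_axisPt, if_pos rfl]; linarith)
    exact neg_lt_neg_iff.1 h
  have hother : ∀ i k : Fin 3, k ≠ i → ∀ x ∈ W i.castSucc, bary k x < 1 - 2 * q := by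
    intro i k hk
    refine hlt _ (hmA i) k ?_
    rw [hm', bary_axisPt, if_neg hk]; linarith
  have hcentre : ∀ k : Fin 3, ∀ x ∈ W 3, bary k x < 1 - 2 * q := by
    intro k
    refine hlt _ hm3A k ?_
    rw [hm3 k, bary_axisPt, if_pos rfl]; linarith
  have hclA : ∀ i, ∀ x ∈ closure (W i), (∀ k, 0 ≤ bary k x) ∧ potF β x ≤ potF β (q, q) := by
    intro i x hx
    have hcl : IsClosed {x | (∀ k, 0 ≤ bary k x) ∧ potF β x ≤ potF β (q, q)} := by
      refine IsClosed.and ?_ (isClosed_le (continuous_potF β) continuous_const)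
      simp only [Set.ofPred_forall]
      exact isClosed_iInter fun k => isClosed_le continuous_const (continuous_bary k)
    refine closure_minimal (fun y hy => ?_) hcl hx
    rw [hWi] at hy
    have hyA := connectedComponentIn_subset A _ hy
    exact ⟨hnn y hyA, hyA.2.le⟩
  have hcl_le : ∀ (i : Fin 4) (k : Fin 3), (∀ x ∈ W i, bary k x < 1 - 2 * q) →
      ∀ x ∈ closure (W i), bary k x ≤ 1 - 2 * q := fun i k h x hx =>
    closure_minimal (fun y hy => (h y hy).le) (isClosed_le (continuous_bary k) continuous_const) hx
  have hcl_ge : ∀ i : Fin 3, ∀ x ∈ closure (W i.castSucc), 1 - 2 * q ≤ bary i x := fun i x hx =>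
    closure_minimal (fun y hy => (hown i y hy).le)
      (isClosed_le continuous_const (continuous_bary i)) hx
  -- A closure point on the `k`-th line is the saddle `σ k`.
  have hpt : ∀ (i : Fin 4) (k : Fin 3), ∀ x ∈ closure (W i), bary k x = 1 - 2 * q →
      x = axisPt k q := fun i k x hx hk =>
    potF_line hβ0 hβ hq0 hq (hclA i x hx).1 (hclA i x hx).2 k hk
  have hself : ∀ i, m i ∈ A → m i ∈ W i := fun i hi => by
    rw [hWi]; exact mem_connectedComponentIn hi
  refine ⟨?_, ?_, ?_⟩
  · intro i j
    induction i using Fin.lastCases with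
    | last =>
      induction j using Fin.lastCases with
      | last => exact fun h => absurd rfl h
      | cast j =>
        intro _ h
        have h1 := hself _ (hmA j)
        exact (hown j _ h1).not_gt (hcentre j _ (h ▸ h1))
    | cast i =>
      have h1 := hself _ (hmA i)
      induction j using Fin.lastCases with
      | last =>
        intro _ h
        exact (hown i _ h1).not_gt (hcentre i _ (h ▸ h1))
      | cast j =>
        intro hij h
        exact (hown i _ h1).not_gt (hother j i (fun e => hij (by rw [e])) _ (h ▸ h1))
  · intro i j hij
    refine Set.eq_empty_of_forall_notMem fun x hx => ?_
    have hi : x = axisPt i q := hpt _ i x hx.1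
      (le_antisymm (hcl_le _ i (hother j i hij) x hx.2) (hcl_ge i x hx.1))
    have hj := hcl_ge j x hx.2
    rw [hi, bary_axisPt, if_neg hij.symm] at hj
    linarith
  · intro i
    rw [hσ']
    refine Set.Subset.antisymm (fun x hx => ?_) ?_
    · exact hpt _ i x hx.1
        (le_antisymm (hcl_le _ i (hcentre i) x hx.2) (hcl_ge i x hx.1))
    · rintro _ rfl
      constructor
      · rw [hWi, hm']
        refine mem_closure_component (continuous_axisPt i) (I := Set.Ico p q)
          isPreconnected_Ico (fun t ht => haxis i t ⟨ht.1, by linarith [ht.2]⟩ ht.2.ne)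
          ⟨le_rfl, hpq⟩ ?_
        rw [closure_Ico hpq.ne]
        exact ⟨hpq.le, le_rfl⟩
      · rw [hWi, hm3 i]
        refine mem_closure_component (continuous_axisPt i) (I := Set.Ioc q (1 / 3))
          isPreconnected_Ioc (fun t ht => haxis i t ⟨by linarith [ht.1], ht.2⟩ ht.1.ne')
          ⟨hq, le_rfl⟩ ?_
        rw [closure_Ioc hq.ne]
        exact ⟨le_rfl, hq.le⟩
end

section
/- The function h is strictly decreasing on (0,1/4], strictly increasing on [1/4,1/3], and strictly decreasing on [1/3,1/2); moreover h(1/3) = 0 and h(t) → 1 as t → 0⁺. Consequently, for every r ∈ (0,1) the equation h(t) = r has exactly one solution t ∈ (0,1/2), while for every r ≥ 1 it has no solution in (0,1/2). -/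
/-!
On `(0, 1/2)` the derivative of `h` collapses to `-3 (1 - 4t) log ((1 - 2t)/t)`, because
`log ((1 - 2t)/t)` has derivative `-1/(t (1 - 2t))`. The factor `1 - 4t` changes sign at `1/4` and
the logarithm changes sign at `1/3`, which gives the three monotonicity intervals.
The limit at `0⁺` follows from continuity of `t log t` at `0`.

For the equation `h(t) = r`: on `[1/4, 1/2)` we have `h ≤ h(1/3) = 0`, so for `r > 0` every solution
lies in `(0, 1/4)`. There `h` is injective, is below `1`, and takes all values in `(0, 1)` by the
intermediate value theorem between a point near `0` and `1/4`.
-/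

/-- `h(t) = −3t(1−2t) log((1−2t)/t) − 3t + 1`. -/
noncomputable def hfun (t : ℝ) : ℝ :=
  -3 * t * (1 - 2 * t) * Real.log ((1 - 2 * t) / t) - 3 * t + 1

lemma hfun_hasDerivAt {t : ℝ} (h0 : 0 < t) (h1 : t < 1 / 2) :
    HasDerivAt hfun (-3 * (1 - 4 * t) * Real.log ((1 - 2 * t) / t)) t := by
  have hp : 0 < 1 - 2 * t := by linarith
  have hlin : HasDerivAt (fun x : ℝ => 1 - 2 * x) (-2) t := by
    simpa using ((hasDerivAt_id t).const_mul 2).const_sub 1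
  have hlog := (hlin.div (hasDerivAt_id t) h0.ne').log (div_pos hp h0).ne'
  have hcoef : HasDerivAt (fun x : ℝ => -3 * x) (-3) t := by
    simpa using (hasDerivAt_id t).const_mul (-3)
  have hthree : HasDerivAt (fun x : ℝ => 3 * x) 3 t := by
    simpa using (hasDerivAt_id t).const_mul 3
  have hall := (((hcoef.mul hlin).mul hlog).sub hthree).add_const 1
  refine hall.congr_deriv ?_
  simp only [Pi.div_apply, Pi.mul_apply, id]
  field_simp
  ring

lemma hfun_continuousOn {s : Set ℝ} (hs : s ⊆ Set.Ioo 0 (1 / 2)) : ContinuousOn hfun s :=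
  fun _ ht => (hfun_hasDerivAt (hs ht).1 (hs ht).2).continuousAt.continuousWithinAt

lemma log_ratio_pos {t : ℝ} (h0 : 0 < t) (h1 : t < 1 / 3) : 0 < Real.log ((1 - 2 * t) / t) := by
  apply Real.log_pos
  rw [lt_div_iff₀ h0]
  linarith

lemma log_ratio_neg {t : ℝ} (h0 : 1 / 3 < t) (h1 : t < 1 / 2) :
    Real.log ((1 - 2 * t) / t) < 0 := by
  have ht : 0 < t := by linarith
  apply Real.log_neg (div_pos (by linarith) ht)
  rw [div_lt_one ht]
  linarith

lemma hfun_strictAntiOn_left : StrictAntiOn hfun (Set.Ioc 0 (1 / 4)) := by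
  apply strictAntiOn_of_deriv_neg (convex_Ioc _ _)
  · exact hfun_continuousOn fun t ht => ⟨ht.1, by linarith [ht.2]⟩
  · intro t ht
    rw [interior_Ioc] at ht
    obtain ⟨h0, h1⟩ := ht
    rw [(hfun_hasDerivAt h0 (by linarith)).deriv]
    exact mul_neg_of_neg_of_pos (by linarith) (log_ratio_pos h0 (by linarith))

lemma hfun_strictMonoOn_middle : StrictMonoOn hfun (Set.Icc (1 / 4) (1 / 3)) := by
  apply strictMonoOn_of_deriv_pos (convex_Icc _ _)
  · exact hfun_continuousOn fun t ht => ⟨by linarith [ht.1], by linarith [ht.2]⟩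
  · intro t ht
    rw [interior_Icc] at ht
    obtain ⟨h0, h1⟩ := ht
    rw [(hfun_hasDerivAt (by linarith) (by linarith)).deriv]
    exact mul_pos (by linarith) (log_ratio_pos (by linarith) h1)

lemma hfun_strictAntiOn_right : StrictAntiOn hfun (Set.Ico (1 / 3) (1 / 2)) := by
  apply strictAntiOn_of_deriv_neg (convex_Ico _ _)
  · exact hfun_continuousOn fun t ht => ⟨by linarith [ht.1], ht.2⟩
  · intro t ht
    rw [interior_Ico] at ht
    obtain ⟨h0, h1⟩ := ht
    rw [(hfun_hasDerivAt (by linarith) h1).deriv]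
    exact mul_neg_of_pos_of_neg (by linarith) (log_ratio_neg h0 h1)

lemma hfun_one_third : hfun (1 / 3) = 0 := by
  unfold hfun
  norm_num

lemma hfun_tendsto_zero : Filter.Tendsto hfun (nhdsWithin 0 (Set.Ioi 0)) (nhds 1) := by
  have hcont : ContinuousAt (fun t : ℝ =>
      -3 * (1 - 2 * t) * (t * Real.log (1 - 2 * t) - t * Real.log t) - 3 * t + 1) 0 := by
    have hmul : ContinuousAt (fun t : ℝ => t * Real.log t) 0 := Real.continuous_mul_log.continuousAt
    have hlog : ContinuousAt (fun t : ℝ => Real.log (1 - 2 * t)) 0 :=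
      ContinuousAt.log (by fun_prop) (by norm_num)
    fun_prop
  have hlim := hcont.tendsto.mono_left (nhdsWithin_le_nhds (s := Set.Ioi 0))
  norm_num at hlim
  refine hlim.congr' ?_
  have hmem : Set.Ioo (0 : ℝ) (1 / 2) ∈ nhdsWithin 0 (Set.Ioi 0) :=
    Ioo_mem_nhdsGT (by norm_num)
  filter_upwards [hmem] with t ht
  have hp : 1 - 2 * t ≠ 0 := by linarith [ht.2]
  rw [hfun, Real.log_div hp ht.1.ne']
  ring

lemma hfun_nonpos {t : ℝ} (h0 : 1 / 4 ≤ t) (h1 : t < 1 / 2) : hfun t ≤ 0 := by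
  rw [← hfun_one_third]
  rcases le_total t (1 / 3) with h | h
  · exact hfun_strictMonoOn_middle.monotoneOn ⟨h0, h⟩ ⟨by norm_num, le_rfl⟩ h
  · exact hfun_strictAntiOn_right.antitoneOn ⟨le_rfl, by norm_num⟩ ⟨h, h1⟩ h

lemma hfun_lt_one {t : ℝ} (h0 : 0 < t) (h1 : t < 1 / 2) : hfun t < 1 := by
  rcases lt_or_ge t (1 / 4) with h | h
  · have hpos : 0 < t * (1 - 2 * t) * Real.log ((1 - 2 * t) / t) :=
      mul_pos (mul_pos h0 (by linarith)) (log_ratio_pos h0 (by linarith))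
    unfold hfun
    linarith
  · linarith [hfun_nonpos h h1]

lemma exists_hfun_eq {r : ℝ} (h0 : 0 < r) (h1 : r < 1) :
    ∃ t ∈ Set.Ioo (0 : ℝ) (1 / 2), hfun t = r := by
  have hmem : Set.Ioo (0 : ℝ) (1 / 4) ∈ nhdsWithin 0 (Set.Ioi 0) :=
    Ioo_mem_nhdsGT (by norm_num)
  obtain ⟨s, hsr, hs⟩ := ((hfun_tendsto_zero.eventually_const_lt h1).and hmem).exists
  have hcont : ContinuousOn hfun (Set.Icc s (1 / 4)) :=
    hfun_continuousOn fun t ht => ⟨by linarith [ht.1, hs.1], by linarith [ht.2]⟩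
  have hquarter : hfun (1 / 4) ≤ 0 := hfun_nonpos le_rfl (by norm_num)
  obtain ⟨t, ht, htr⟩ := intermediate_value_Icc' hs.2.le hcont ⟨by linarith, hsr.le⟩
  exact ⟨t, ⟨by linarith [ht.1, hs.1], by linarith [ht.2]⟩, htr⟩

/-- monotonicity of `h`, `h(1/3) = 0`, `h(t) → 1` as `t → 0⁺`; hence for
`r ∈ (0,1)` the equation `h(t) = r` has exactly one solution in `(0,1/2)` and for `r ≥ 1`
it has none. -/
theorem hfun_monotonicity_and_solutions :
    StrictAntiOn hfun (Set.Ioc 0 (1 / 4)) ∧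
    StrictMonoOn hfun (Set.Icc (1 / 4) (1 / 3)) ∧
    StrictAntiOn hfun (Set.Ico (1 / 3) (1 / 2)) ∧
    hfun (1 / 3) = 0 ∧
    Filter.Tendsto hfun (nhdsWithin 0 (Set.Ioi 0)) (nhds 1) ∧
    (∀ r ∈ Set.Ioo (0 : ℝ) 1, ∃! t, t ∈ Set.Ioo (0 : ℝ) (1 / 2) ∧ hfun t = r) ∧
    (∀ r : ℝ, 1 ≤ r → ¬ ∃ t ∈ Set.Ioo (0 : ℝ) (1 / 2), hfun t = r) := by
  refine ⟨hfun_strictAntiOn_left, hfun_strictMonoOn_middle, hfun_strictAntiOn_right,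
    hfun_one_third, hfun_tendsto_zero, ?_, ?_⟩
  · rintro r ⟨hr0, hr1⟩
    have hloc : ∀ t ∈ Set.Ioo (0 : ℝ) (1 / 2), hfun t = r → t ∈ Set.Ioc (0 : ℝ) (1 / 4) := by
      intro t ht htr
      refine ⟨ht.1, ?_⟩
      by_contra! hlt
      linarith [hfun_nonpos hlt.le ht.2]
    obtain ⟨t, ht, htr⟩ := exists_hfun_eq hr0 hr1
    refine ⟨t, ⟨ht, htr⟩, ?_⟩
    rintro u ⟨hu, hur⟩
    exact hfun_strictAntiOn_left.injOn (hloc u hu hur) (hloc t ht htr) (hur.trans htr.symm)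
  · rintro r hr ⟨t, ht, htr⟩
    linarith [hfun_lt_one ht.1 ht.2]
end

section
/- Let β > 2, 0 < r < 1, and let m_0(r) be the unique point of (0,1/2) with h(m_0(r)) = r. Consider the potential with external field of angle θ_e = π and magnitude r, F_β(x,r) = F_β(x) + r·x_0 − (r/2)(x_1+x_2). Suppose t ∈ (m_0(r), (1−r)/3) satisfies f_r(t) = β. If t > 2/(3β), then (t,t) is a local maximum of F_β(·,r); if t < 2/(3β), then (t,t) is a critical point of F_β(·,r) at which the Hessian of F_β(·,r) has strictly negative determinant, i.e. (t,t) is a saddle point. -/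
/-- The canonical basis of `ℝ × ℝ`. -/
noncomputable def eBasis : Fin 2 → ℝ × ℝ := ![(1, 0), (0, 1)]

/-- The Hessian matrix of a function `f : ℝ × ℝ → ℝ` at a point `x`. -/
noncomputable def hessian (f : ℝ × ℝ → ℝ) (x : ℝ × ℝ) : Matrix (Fin 2) (Fin 2) ℝ :=
  Matrix.of fun i j => fderiv ℝ (fun y => fderiv ℝ f y (eBasis j)) x (eBasis i)

/-- `f_r(t) = (2/(3(1−r−3t))) log((1−2t)/t)`. -/
noncomputable def frfun (r t : ℝ) : ℝ :=
  2 / (3 * (1 - r - 3 * t)) * Real.log ((1 - 2 * t) / t)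

/-- The potential with external field of angle `θ_e = π` and magnitude `r`:
`F_β(x,r) = F_β(x) + r x₀ − (r/2)(x₁ + x₂)`. -/
noncomputable def potFpi (β r : ℝ) (x : ℝ × ℝ) : ℝ :=
  potF β x + r * (1 - x.1 - x.2) - (r / 2) * (x.1 + x.2)

lemma hasDerivAt_hfun {u : ℝ} (hu0 : 0 < u) (hu1 : u < 1 / 2) :
    HasDerivAt hfun (-3 * (1 - 4 * u) * Real.log ((1 - 2 * u) / u)) u := by
  have h1 : (0 : ℝ) < 1 - 2 * u := by linarith
  have hid := hasDerivAt_id' u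
  have hlin : HasDerivAt (fun v : ℝ => 1 - 2 * v) (-2) u := by
    simpa using (hid.const_mul 2).const_sub 1
  have hlog := (hlin.div hid hu0.ne').log (div_pos h1 hu0).ne'
  have h := ((((hid.const_mul (-3)).mul hlin).mul hlog).sub (hid.const_mul 3)).add_const 1
  refine HasDerivAt.congr_deriv (f := hfun) h ?_
  simp only [Pi.div_apply, Pi.mul_apply]
  field_simp
  ring

lemma log_ratio_pos_s17 {u : ℝ} (hu0 : 0 < u) (hu1 : u < 1 / 3) :
    0 < Real.log ((1 - 2 * u) / u) := by
  apply Real.log_pos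
  rw [lt_div_iff₀ hu0]
  linarith

/-- Beyond a solution `m` of `h = r > 0`, the function `h` stays below `r` up to `1/3`. -/
lemma hfun_lt {r m t : ℝ} (hr : 0 < r) (hm : 0 < m) (hmr : hfun m = r) (hmt : m < t)
    (ht : t < 1 / 3) : hfun t < r := by
  by_cases h4 : t ≤ 1 / 4
  · have hanti : StrictAntiOn hfun (Set.Icc m t) := by
      refine strictAntiOn_of_deriv_neg (convex_Icc m t) ?_ ?_
      · intro u hu
        exact (hasDerivAt_hfun (by linarith [hu.1])
          (by linarith [hu.2])).continuousAt.continuousWithinAt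
      · intro u hu
        rw [interior_Icc] at hu
        rw [(hasDerivAt_hfun (by linarith [hu.1]) (by linarith [hu.2])).deriv]
        have := log_ratio_pos_s17 (u := u) (by linarith [hu.1]) (by linarith [hu.2])
        have h2 : 0 < 1 - 4 * u := by linarith [hu.2]
        nlinarith [mul_pos h2 this]
    have := hanti (Set.left_mem_Icc.2 hmt.le) (Set.right_mem_Icc.2 hmt.le) hmt
    rwa [hmr] at this
  · push Not at h4
    have hmono : StrictMonoOn hfun (Set.Icc t (1 / 3)) := by
      refine strictMonoOn_of_deriv_pos (convex_Icc _ _) ?_ ?_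
      · intro u hu
        exact (hasDerivAt_hfun (by linarith [hu.1])
          (by linarith [hu.2])).continuousAt.continuousWithinAt
      · intro u hu
        rw [interior_Icc] at hu
        rw [(hasDerivAt_hfun (by linarith [hu.1]) (by linarith [hu.2])).deriv]
        have := log_ratio_pos_s17 (u := u) (by linarith [hu.1]) (by linarith [hu.2])
        have h2 : 0 < 4 * u - 1 := by linarith [hu.1]
        nlinarith [mul_pos h2 this]
    have h3 := hmono (Set.left_mem_Icc.2 ht.le) (Set.right_mem_Icc.2 ht.le) ht
    have : hfun (1 / 3) = 0 := by norm_num [hfun]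
    linarith

/-- The potential in the coordinates `x₁ + x₂`, `x₁ - x₂`. -/
lemma potFpi_eq (β r : ℝ) (x : ℝ × ℝ) :
    potFpi β r x = -(1 / 8) * (3 * (x.1 + x.2) - 2) ^ 2 - (3 / 8) * (x.1 - x.2) ^ 2
      + (1 / β) * ((1 - x.1 - x.2) * Real.log (3 * (1 - x.1 - x.2))
        + x.1 * Real.log (3 * x.1) + x.2 * Real.log (3 * x.2))
      + r * (1 - x.1 - x.2) - (r / 2) * (x.1 + x.2) := by
  have c1 : Real.cos (2 * Real.pi * (1 : ℕ) / 3) = -(1 / 2) := by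
    rw [show 2 * Real.pi * (1 : ℕ) / 3 = Real.pi - Real.pi / 3 by push_cast; ring,
      Real.cos_pi_sub, Real.cos_pi_div_three]
  have s1 : Real.sin (2 * Real.pi * (1 : ℕ) / 3) = √3 / 2 := by
    rw [show 2 * Real.pi * (1 : ℕ) / 3 = Real.pi - Real.pi / 3 by push_cast; ring,
      Real.sin_pi_sub, Real.sin_pi_div_three]
  have c2 : Real.cos (2 * Real.pi * (2 : ℕ) / 3) = -(1 / 2) := by
    rw [show 2 * Real.pi * (2 : ℕ) / 3 = Real.pi / 3 + Real.pi by push_cast; ring,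
      Real.cos_add_pi, Real.cos_pi_div_three]
  have s2 : Real.sin (2 * Real.pi * (2 : ℕ) / 3) = -(√3 / 2) := by
    rw [show 2 * Real.pi * (2 : ℕ) / 3 = Real.pi / 3 + Real.pi by push_cast; ring,
      Real.sin_add_pi, Real.sin_pi_div_three]
  have h3 : (√3 : ℝ) ^ 2 = 3 := Real.sq_sqrt (by norm_num)
  simp only [potFpi, potF, potPsi, potV, potS, c1, c2, s1, s2]
  linear_combination (-(1 / 8) * (x.1 - x.2) ^ 2) * h3

lemma hasDerivAt_ulog {u : ℝ} (hu : 0 < u) :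
    HasDerivAt (fun v : ℝ => v * Real.log (3 * v)) (Real.log (3 * u) + 1) u := by
  have hid := hasDerivAt_id' u
  have h := hid.mul ((hid.const_mul 3).log (by positivity))
  refine h.congr_deriv ?_
  field_simp

/-- Second-order Taylor upper bound for `u log(3u)`, whose second derivative at `a` is `1/a`. -/
lemma ulog_le_quadratic {a c : ℝ} (ha : 0 < a) (hc : 1 / a < c) :
    ∀ᶠ u in nhds a, u * Real.log (3 * u) ≤
      a * Real.log (3 * a) + (Real.log (3 * a) + 1) * (u - a) + c / 2 * (u - a) ^ 2 := by
  set g : ℝ → ℝ := fun u => u * Real.log (3 * u) -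
    ((Real.log (3 * a) + 1) * (u - a) + c / 2 * (u - a) ^ 2) with hg
  have hder : ∀ u, 0 < u → HasDerivAt g (Real.log (3 * u) - Real.log (3 * a) - c * (u - a)) u := by
    intro u hu
    have hs := (hasDerivAt_id' u).sub_const a
    have h := (hasDerivAt_ulog hu).sub
      ((hs.const_mul (Real.log (3 * a) + 1)).add ((hs.pow 2).const_mul (c / 2)))
    refine h.congr_deriv ?_
    norm_num
    ring
  have hev : deriv g =ᶠ[nhds a] fun u => Real.log (3 * u) - Real.log (3 * a) - c * (u - a) := by
    filter_upwards [lt_mem_nhds ha] with u hu using (hder u hu).deriv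
  have hdd : deriv (deriv g) a = 1 / a - c := by
    rw [hev.deriv_eq]
    have hid := hasDerivAt_id' a
    have h := (((hid.const_mul 3).log (by positivity)).sub_const (Real.log (3 * a))).sub
      ((hid.sub_const a).const_mul c)
    refine (h.congr_deriv ?_).deriv
    field_simp
  have hmax : IsLocalMax g a := by
    apply isLocalMax_of_deriv_deriv_neg
    · rw [hdd]; linarith
    · rw [(hder a ha).deriv]; ring
    · exact (hder a ha).continuousAt
  filter_upwards [hmax] with u hu
  simp only [hg] at hu
  nlinarith [hu]

/-- The partial derivatives of the potential: `σ = 1` for `x₁` and `σ = -1` for `x₂`, with `v`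
the corresponding coordinate. -/
noncomputable def potPartial (β r σ v : ℝ) (x : ℝ × ℝ) : ℝ :=
  -(3 / 4) * (3 * (x.1 + x.2) - 2) - σ * (3 / 4) * (x.1 - x.2)
    + (1 / β) * (Real.log (3 * v) - Real.log (3 * (1 - x.1 - x.2))) - 3 * r / 2

lemma hasFDerivAt_potFpi (β r : ℝ) {x : ℝ × ℝ} (hx : x ∈ simplexInt) :
    HasFDerivAt (potFpi β r)
      (potPartial β r 1 x.1 x • ContinuousLinearMap.fst ℝ ℝ ℝ
        + potPartial β r (-1) x.2 x • ContinuousLinearMap.snd ℝ ℝ ℝ) x := by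
  obtain ⟨h1, h2, h12⟩ := hx
  have h0 : 0 < 1 - x.1 - x.2 := by linarith
  have d1 : HasFDerivAt (fun y : ℝ × ℝ => y.1) (ContinuousLinearMap.fst ℝ ℝ ℝ) x := hasFDerivAt_fst
  have d2 : HasFDerivAt (fun y : ℝ × ℝ => y.2) (ContinuousLinearMap.snd ℝ ℝ ℝ) x := hasFDerivAt_snd
  have d0 := (d1.const_sub 1).sub d2
  have e1 := (hasDerivAt_ulog h1).comp_hasFDerivAt x d1
  have e2 := (hasDerivAt_ulog h2).comp_hasFDerivAt x d2
  have e0 := (hasDerivAt_ulog h0).comp_hasFDerivAt x d0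
  have h := ((((((((d1.add d2).const_mul 3).sub_const 2).pow 2).const_mul (-(1 / 8))).sub
    (((d1.sub d2).pow 2).const_mul (3 / 8))).add (((e0.add e1).add e2).const_mul (1 / β))).add
      (d0.const_mul r)).sub ((d1.add d2).const_mul (r / 2))
  have hfun_eq : potFpi β r = _ := funext (potFpi_eq β r)
  rw [hfun_eq]
  refine h.congr_fderiv ?_
  ext
  · simp [potPartial]
    ring
  · simp [potPartial]
    ring

lemma hasFDerivAt_potPartial (β r σ : ℝ) {x : ℝ × ℝ} {p : ℝ × ℝ →L[ℝ] ℝ} (hp : 0 < p x)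
    (hx : 0 < 1 - x.1 - x.2) :
    HasFDerivAt (fun y => potPartial β r σ (p y) y)
      ((-(9 / 4) - σ * (3 / 4) + 1 / β / (1 - x.1 - x.2)) • ContinuousLinearMap.fst ℝ ℝ ℝ
        + (-(9 / 4) + σ * (3 / 4) + 1 / β / (1 - x.1 - x.2)) • ContinuousLinearMap.snd ℝ ℝ ℝ
        + (1 / β / p x) • p) x := by
  have d1 : HasFDerivAt (fun y : ℝ × ℝ => y.1) (ContinuousLinearMap.fst ℝ ℝ ℝ) x := hasFDerivAt_fst
  have d2 : HasFDerivAt (fun y : ℝ × ℝ => y.2) (ContinuousLinearMap.snd ℝ ℝ ℝ) x := hasFDerivAt_snd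
  have d0 := (d1.const_sub 1).sub d2
  have e0 := (d0.const_mul 3).log (by simp only [Pi.sub_apply]; positivity)
  have ep := ((p.hasFDerivAt (x := x)).const_mul 3).log (by positivity)
  have h := ((((((d1.add d2).const_mul 3).sub_const 2).const_mul (-(3 / 4))).sub
    ((d1.sub d2).const_mul (σ * (3 / 4)))).add ((ep.sub e0).const_mul (1 / β))).sub_const (3 * r / 2)
  refine h.congr_fderiv ?_
  ext
  · simp
    field_simp
    ring
  · simp
    field_simp
    ring

lemma simplexInt_mem_nhds {x : ℝ × ℝ} (hx : x ∈ simplexInt) : simplexInt ∈ nhds x := by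
  refine IsOpen.mem_nhds ?_ hx
  exact (isOpen_lt continuous_const continuous_fst).inter
    ((isOpen_lt continuous_const continuous_snd).inter
      (isOpen_lt (continuous_fst.add continuous_snd) continuous_const))

lemma det_hessian_potFpi (β r : ℝ) {t : ℝ} (ht0 : 0 < t) (ht1 : t < 1 / 2) :
    (hessian (potFpi β r) (t, t)).det =
      (-(9 / 2) + 1 / β * (1 / t + 2 / (1 - 2 * t))) * (-(3 / 2) + 1 / β * (1 / t)) := by
  have hmem : ((t, t) : ℝ × ℝ) ∈ simplexInt := ⟨ht0, ht0, by simp only; linarith⟩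
  have h0 : 0 < 1 - ((t, t) : ℝ × ℝ).1 - ((t, t) : ℝ × ℝ).2 := by simp only; linarith
  have hn := simplexInt_mem_nhds hmem
  have g1 : (fun y => fderiv ℝ (potFpi β r) y (1, 0)) =ᶠ[nhds (t, t)]
      fun y => potPartial β r 1 (ContinuousLinearMap.fst ℝ ℝ ℝ y) y := by
    filter_upwards [hn] with y hy
    rw [(hasFDerivAt_potFpi β r hy).fderiv]
    simp
  have g2 : (fun y => fderiv ℝ (potFpi β r) y (0, 1)) =ᶠ[nhds (t, t)]
      fun y => potPartial β r (-1) (ContinuousLinearMap.snd ℝ ℝ ℝ y) y := by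
    filter_upwards [hn] with y hy
    rw [(hasFDerivAt_potFpi β r hy).fderiv]
    simp
  have k1 := (hasFDerivAt_potPartial β r 1 (x := (t, t)) (p := ContinuousLinearMap.fst ℝ ℝ ℝ)
    ht0 h0).fderiv
  have k2 := (hasFDerivAt_potPartial β r (-1) (x := (t, t)) (p := ContinuousLinearMap.snd ℝ ℝ ℝ)
    ht0 h0).fderiv
  rw [Matrix.det_fin_two]
  simp only [hessian, eBasis, Matrix.of_apply, Matrix.cons_val_zero, Matrix.cons_val_one,
    g1.fderiv_eq, g2.fderiv_eq, k1, k2]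
  have h12 : 1 - t - t = 1 - 2 * t := by ring
  simp [h12]
  ring

/-- The `s`-eigenvalue inequality: it amounts to `h(t) < r` once `β` is replaced by `f_r(t)`. -/
lemma radial_neg {β r t : ℝ} (ht0 : 0 < t) (htr : t < (1 - r) / 3) (hr0 : 0 < r)
    (hft : frfun r t = β) (hh : hfun t < r) : 1 / t + 2 / (1 - 2 * t) < 9 / 2 * β := by
  have h1 : 0 < 1 - 2 * t := by linarith
  have h2 : 0 < 1 - r - 3 * t := by linarith
  have e : 1 / t + 2 / (1 - 2 * t) = 1 / (t * (1 - 2 * t)) := by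
    rw [div_add_div _ _ ht0.ne' h1.ne']
    ring
  rw [e, ← hft, frfun, div_lt_iff₀ (by positivity)]
  rw [hfun] at hh
  set L := Real.log ((1 - 2 * t) / t)
  have : 9 / 2 * (2 / (3 * (1 - r - 3 * t)) * L) * (t * (1 - 2 * t))
      = (3 * t * (1 - 2 * t) * L) / (1 - r - 3 * t) := by field_simp; ring
  rw [this, lt_div_iff₀ h2]
  linarith

/-- The critical-point equation at `(t,t)` is `f_r(t) = β`. -/
lemma critical_eq {β r t : ℝ} (hβ : 0 < β) (ht0 : 0 < t) (htr : t < (1 - r) / 3) (hr0 : 0 < r)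
    (hft : frfun r t = β) :
    1 / β * (Real.log (3 * (1 - 2 * t)) - Real.log (3 * t)) = 3 / 2 * (1 - r - 3 * t) := by
  have h1 : 0 < 1 - 2 * t := by linarith
  have h2 : 0 < 1 - r - 3 * t := by linarith
  have hL : Real.log (3 * (1 - 2 * t)) - Real.log (3 * t) = Real.log ((1 - 2 * t) / t) := by
    rw [← Real.log_div (by positivity) (by positivity), mul_div_mul_left _ _ (by norm_num)]
  rw [hL]
  rw [frfun] at hft
  field_simp at hft ⊢
  linarith

lemma isLocalMax_of_ineqs {β r t : ℝ} (hβ : 0 < β) (ht0 : 0 < t) (ht1 : t < 1 / 2)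
    (hcrit : 1 / β * (Real.log (3 * (1 - 2 * t)) - Real.log (3 * t)) = 3 / 2 * (1 - r - 3 * t))
    (hrad : 1 / t + 2 / (1 - 2 * t) < 9 / 2 * β) (htan : 1 / t < 3 / 2 * β) :
    IsLocalMax (potFpi β r) (t, t) := by
  have h1 : 0 < 1 - 2 * t := by linarith
  -- `ε` is the room available for enlarging the quadratic coefficients `1/t` and `1/(1-2t)`.
  obtain ⟨ε, hε, he1, he2⟩ : ∃ ε > 0, 1 / t + ε ≤ 3 / 2 * β ∧
      (1 / t + ε) + 2 * (1 / (1 - 2 * t) + ε) ≤ 9 / 2 * β := by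
    refine ⟨min (3 / 2 * β - 1 / t) ((9 / 2 * β - (1 / t + 2 / (1 - 2 * t))) / 3),
      lt_min (by linarith) (by linarith), ?_, ?_⟩
    · linarith [min_le_left (3 / 2 * β - 1 / t) ((9 / 2 * β - (1 / t + 2 / (1 - 2 * t))) / 3)]
    · have e : 2 / (1 - 2 * t) = 2 * (1 / (1 - 2 * t)) := by ring
      linarith [min_le_right (3 / 2 * β - 1 / t) ((9 / 2 * β - (1 / t + 2 / (1 - 2 * t))) / 3)]
  set c1 := 1 / t + ε with hc1
  set c0 := 1 / (1 - 2 * t) + ε with hc0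
  have q1 := ulog_le_quadratic ht0 (show 1 / t < c1 by linarith)
  have q0 := ulog_le_quadratic h1 (show 1 / (1 - 2 * t) < c0 by linarith)
  have t1 : Filter.Tendsto (fun x : ℝ × ℝ => x.1) (nhds (t, t)) (nhds t) :=
    continuous_fst.tendsto (t, t)
  have t2 : Filter.Tendsto (fun x : ℝ × ℝ => x.2) (nhds (t, t)) (nhds t) :=
    continuous_snd.tendsto (t, t)
  have t0 : Filter.Tendsto (fun x : ℝ × ℝ => 1 - x.1 - x.2) (nhds (t, t)) (nhds (1 - 2 * t)) := by
    have := (t1.const_sub 1).sub t2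
    rwa [show 1 - t - t = 1 - 2 * t by ring] at this
  filter_upwards [t1.eventually q1, t2.eventually q1, t0.eventually q0] with x b1 b2 b0
  rw [potFpi_eq, potFpi_eq]
  simp only
  rw [show 1 - t - t = 1 - 2 * t by ring]
  have hb : 0 < 1 / β := by positivity
  have hS := mul_le_mul_of_nonneg_left (add_le_add (add_le_add b0 b1) b2) hb.le
  have hββ : 1 / β * β = 1 := by field_simp
  have f1 : 1 / β * c1 ≤ 3 / 2 := by
    have := mul_le_mul_of_nonneg_left he1 hb.le
    linarith
  have f2 : 1 / β * (c1 + 2 * c0) ≤ 9 / 2 := by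
    have := mul_le_mul_of_nonneg_left he2 hb.le
    linarith
  have p1 := mul_le_mul_of_nonneg_right f1 (sq_nonneg (x.1 - x.2))
  have p2 := mul_le_mul_of_nonneg_right f2 (sq_nonneg (x.1 + x.2 - 2 * t))
  generalize 1 / β = b at *
  generalize Real.log (3 * (1 - 2 * t)) = l0 at *
  generalize Real.log (3 * t) = l1 at *
  have key := congrArg (fun z => z * (x.1 + x.2 - 2 * t)) hcrit
  linarith


/-- for `β > 2`, `0 < r < 1`, `m₀(r)` the unique solution of `h = r`, and
`t ∈ (m₀(r),(1−r)/3)` with `f_r(t) = β`: if `t > 2/(3β)`, then `(t,t)` is a local maximum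
of `F_β(·,r)`; if `t < 2/(3β)`, then `(t,t)` is a critical point of `F_β(·,r)` whose
Hessian has strictly negative determinant, i.e. a saddle point. -/
theorem potts_external_field_pi_middle_point (β r m0 t : ℝ) (hβ : 2 < β)
    (hr0 : 0 < r) (hr1 : r < 1)
    (hm0 : m0 ∈ Set.Ioo (0 : ℝ) (1 / 2)) (hm0r : hfun m0 = r)
    (ht : t ∈ Set.Ioo m0 ((1 - r) / 3)) (hft : frfun r t = β) :
    (2 / (3 * β) < t → IsLocalMax (potFpi β r) (t, t)) ∧
    (t < 2 / (3 * β) →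
      fderiv ℝ (potFpi β r) (t, t) = 0 ∧ (hessian (potFpi β r) (t, t)).det < 0) := by
  obtain ⟨hmt, htr⟩ := ht
  have ht0 : 0 < t := hm0.1.trans hmt
  have ht1 : t < 1 / 3 := by linarith
  have hβ0 : 0 < β := by linarith
  have hcrit := critical_eq hβ0 ht0 htr hr0 hft
  have hrad := radial_neg ht0 htr hr0 hft (hfun_lt hr0 hm0.1 hm0r hmt ht1)
  refine ⟨fun h => ?_, fun h => ⟨?_, ?_⟩⟩
  · refine isLocalMax_of_ineqs hβ0 ht0 (by linarith) hcrit hrad ?_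
    rw [div_lt_iff₀ (by positivity)] at h ⊢
    linarith
  · have hmem : ((t, t) : ℝ × ℝ) ∈ simplexInt := ⟨ht0, ht0, by simp only; linarith⟩
    have h12 : 1 - t - t = 1 - 2 * t := by ring
    have hz : ∀ σ : ℝ, potPartial β r σ t (t, t) = 0 := by
      intro σ
      simp only [potPartial, h12]
      linarith
    rw [(hasFDerivAt_potFpi β r hmem).fderiv]
    simp [hz]
  · rw [det_hessian_potFpi β r ht0 (by linarith)]
    have hb : 0 < 1 / β := by positivity
    have hββ : 1 / β * β = 1 := by field_simp
    apply mul_neg_of_neg_of_pos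
    · have := mul_lt_mul_of_pos_left hrad hb
      linarith
    · have h' : 3 / 2 * β < 1 / t := by
        rw [lt_div_iff₀ (by positivity)] at h ⊢
        linarith
      have := mul_lt_mul_of_pos_left h' hb
      linarith
end

section
/- Let β > 0. Suppose a, a′, b, b′ are positive reals with 0 < a′ < a ≤ l_β, l_β ≤ b, l_β ≤ b′, and G_β(a) = G_β(b), G_β(a′) = G_β(b′). Then a′ + b′ > a + b. (Equivalently, writing H_β and K_β for the two branches of the inverse of G_β on (0,l_β] and [l_β,∞) respectively, the function y ↦ H_β(y) + K_β(y) is strictly decreasing on (−∞, G_β(l_β)].) -/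
/-!
Put `c = 1 / l_β = 3β/2`, so that `G_β(a) = G_β(b)` reads `log b - log a = c (b - a)`.
With `x = (b - a) / (b + a) ∈ [0, 1)` one has `b / a = (1 + x) / (1 - x)`, so this equation becomes
`c (a + b) x = log (1 + x) - log (1 - x)`, that is,
`c (a + b) = ∑ 2 / (2k + 1) * x ^ (2k)` (`hasSum_of_log_eq`; for `x = 0` both sides are `2`,
since then `a = b = l_β`). The series is strictly increasing in `x`, so it remains to see that
passing from `(a, b)` to `(a', b')` increases `x`; as `a' < a`, this follows from `b ≤ b'`, which is
the monotonicity of `G_β` on either side of `l_β`.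
-/

/-- `G_β(u) = (1/β) log u − (3/2) u`. -/
noncomputable def Gfun (β u : ℝ) : ℝ := (1 / β) * Real.log u - (3 / 2) * u

/-- Strict monotonicity of `u ↦ log u - c u` on `(0, 1 / c]`. -/
lemma mul_sub_lt_log_sub_log {c u v : ℝ} (hu : 0 < u) (huv : u < v) (hv : v * c ≤ 1) :
    c * (v - u) < Real.log v - Real.log u := by
  have hv0 : 0 < v := hu.trans huv
  have h := Real.log_lt_sub_one_of_pos (div_pos hu hv0) ((div_lt_one hv0).2 huv).ne
  rw [Real.log_div hu.ne' hv0.ne'] at h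
  have h2 : c * (v - u) ≤ 1 - u / v := by
    rw [one_sub_div hv0.ne', le_div_iff₀ hv0]
    nlinarith
  linarith

/-- Strict antitonicity of `u ↦ log u - c u` on `[1 / c, ∞)`. -/
lemma log_sub_log_lt_mul_sub {c u v : ℝ} (hu : 0 < u) (huv : u < v) (hc : 1 ≤ u * c) :
    Real.log v - Real.log u < c * (v - u) := by
  have hv0 : 0 < v := hu.trans huv
  have h := Real.log_lt_sub_one_of_pos (div_pos hv0 hu) ((one_lt_div hu).2 huv).ne'
  rw [Real.log_div hv0.ne' hu.ne'] at h
  have h2 : v / u - 1 ≤ c * (v - u) := by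
    rw [div_sub_one hu.ne', div_le_iff₀ hu]
    nlinarith
  linarith

/-- The sum of two points on the same level of `log u - c u`, as a power series in
`x = (b - a) / (b + a)`: this is the expansion of `(log (1 + x) - log (1 - x)) / x`. -/
lemma hasSum_of_log_eq {c a b : ℝ} (ha : 0 < a) (hac : a * c ≤ 1) (hbc : 1 ≤ b * c)
    (hab : a ≤ b) (h : Real.log b - Real.log a = c * (b - a)) :
    HasSum (fun k : ℕ => 2 * (1 / (2 * (k : ℝ) + 1)) * ((b - a) / (b + a)) ^ (2 * k))
      (c * (a + b)) := by
  rcases hab.eq_or_lt with rfl | hlt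
  · have hs : c * (a + a) = 2 := by linarith
    rw [hs]
    convert hasSum_single (f := fun k : ℕ =>
      2 * (1 / (2 * (k : ℝ) + 1)) * ((a - a) / (a + a)) ^ (2 * k)) 0 ?_ using 1
    · simp
    · intro k hk
      simp [hk]
  · have hs : 0 < b + a := by linarith
    have hx0 : 0 < (b - a) / (b + a) := div_pos (by linarith) hs
    have hx1 : (b - a) / (b + a) < 1 := (div_lt_one hs).2 (by linarith)
    have hS := Real.hasSum_log_sub_log_of_abs_lt_one (abs_lt.2 ⟨by linarith, hx1⟩)
    have e1 : 1 + (b - a) / (b + a) = 2 * b / (b + a) := by field_simp; ring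
    have e2 : 1 - (b - a) / (b + a) = 2 * a / (b + a) := by field_simp; ring
    have hb : 0 < b := ha.trans hlt
    have e3 : Real.log (1 + (b - a) / (b + a)) - Real.log (1 - (b - a) / (b + a))
        = c * (b - a) := by
      rw [e1, e2, Real.log_div (by positivity) hs.ne', Real.log_div (by positivity) hs.ne',
        Real.log_mul two_ne_zero hb.ne', Real.log_mul two_ne_zero ha.ne', ← h]
      ring
    rw [e3] at hS
    have hval : c * (b - a) / ((b - a) / (b + a)) = c * (a + b) := by
      have hne : b - a ≠ 0 := (sub_pos.2 hlt).ne'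
      field_simp
      ring
    have hT := hS.div_const ((b - a) / (b + a))
    rw [hval] at hT
    refine (congrArg (HasSum · _) (funext fun k => ?_)).mp hT
    rw [pow_succ, ← mul_assoc, mul_div_cancel_right₀ _ hx0.ne']

lemma log_sub_log_of_Gfun_eq {β a b : ℝ} (hβ : 0 < β) (h : Gfun β a = Gfun β b) :
    Real.log b - Real.log a = 3 * β / 2 * (b - a) := by
  unfold Gfun at h
  field_simp at h
  linarith

/-- if `0 < a′ < a ≤ l_β`, `l_β ≤ b`, `l_β ≤ b′` with `G_β(a) = G_β(b)` and
`G_β(a′) = G_β(b′)`, then `a′ + b′ > a + b`; i.e. `H_β + K_β` is strictly decreasing. -/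
theorem Gfun_sum_of_branches_strictAnti (β a a' b b' : ℝ) (hβ : 0 < β)
    (ha' : 0 < a') (haa : a' < a) (ha : a ≤ 2 / (3 * β))
    (hb : 2 / (3 * β) ≤ b) (hb' : 2 / (3 * β) ≤ b')
    (hab : Gfun β a = Gfun β b) (hab' : Gfun β a' = Gfun β b') :
    a + b < a' + b' := by
  have h := log_sub_log_of_Gfun_eq hβ hab
  have h' := log_sub_log_of_Gfun_eq hβ hab'
  have hle : a ≤ b := ha.trans hb
  have hle' : a' ≤ b' := (haa.le.trans ha).trans hb'
  rw [le_div_iff₀ (by positivity)] at ha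
  rw [div_le_iff₀ (by positivity)] at hb hb'
  have hc : 0 < 3 * β / 2 := by positivity
  have hac : a * (3 * β / 2) ≤ 1 := by linarith
  have hbc : 1 ≤ b * (3 * β / 2) := by linarith
  have hbc' : 1 ≤ b' * (3 * β / 2) := by linarith
  generalize 3 * β / 2 = c at *
  have ha0 : 0 < a := ha'.trans haa
  have hb0 : 0 < b := ha0.trans_le hle
  have hb0' : 0 < b' := ha'.trans_le hle'
  have hbb : b ≤ b' := by
    by_contra! hlt
    have h1 := mul_sub_lt_log_sub_log ha' haa hac
    have h2 := log_sub_log_lt_mul_sub hb0' hlt hbc'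
    linarith
  have hac' : a' * c ≤ 1 := (mul_le_mul_of_nonneg_right haa.le hc.le).trans hac
  have hS := hasSum_of_log_eq ha0 hac hbc hle h
  have hS' := hasSum_of_log_eq ha' hac' hbc' hle' h'
  have hx0 : 0 ≤ (b - a) / (b + a) := div_nonneg (by linarith) (by linarith)
  have hxx : (b - a) / (b + a) < (b' - a') / (b' + a') := by
    rw [div_lt_div_iff₀ (by linarith) (by linarith)]
    nlinarith [mul_lt_mul_of_pos_left haa hb0, mul_le_mul_of_nonneg_right hbb ha0.le]
  have key : c * (a + b) < c * (a' + b') := by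
    -- The constant terms agree, so strictness comes from the term `k = 1`.
    refine hasSum_lt (i := 1) (fun k => ?_) ?_ hS hS'
    · exact mul_le_mul_of_nonneg_left (pow_le_pow_left₀ hx0 hxx.le _) (by positivity)
    · exact mul_lt_mul_of_pos_left (pow_lt_pow_left₀ hxx hx0 (by norm_num)) (by positivity)
  exact lt_of_mul_lt_mul_left key hc.le
end

section
/- Let β > 2 and r > 0. Then there exists exactly one pair (x_1,x_2) with 0 < x_1 ≤ l_β ≤ x_2, x_1 + x_2 < 1, and x_0 := 1 − x_1 − x_2 satisfying 0 < x_0 ≤ l_β and G_β(x_0) + 3r/2 = G_β(x_1) = G_β(x_2). Moreover this pair satisfies the strict inequalities x_0 < l_β and x_1 < l_β < x_2, and (x_1,x_2) is a local minimum of the potential with external field of angle θ_e = π and magnitude r, F_β(x,r) = F_β(x) + r·x_0 − (r/2)(x_1+x_2). -/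
namespace Potts

/-! ### The logarithmic mean -/

/-- The logarithmic mean of `1` and `k`; meaningful for `k > 1`. -/
noncomputable def M (k : ℝ) : ℝ := (k - 1) / Real.log k

/-- The ratio `x₀/x₁` forced by `x₂ = k x₁`, `x₁ = l / M k` and `x₀ + x₁ + x₂ = 1`. -/
noncomputable def J (l k : ℝ) : ℝ := M k / l - 1 - k

/-- The geometric mean of `1` and `k` is below their logarithmic mean; with `k = s²` this is
`x < sinh x` at `x = log s`. -/
lemma mul_log_sq_lt {k : ℝ} (hk : 1 < k) : k * Real.log k ^ 2 < (k - 1) ^ 2 := by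
  have hs : 1 < Real.sqrt k := Real.lt_sqrt_of_sq_lt (by simpa using hk)
  have hk' : k = Real.sqrt k ^ 2 := (Real.sq_sqrt (by linarith)).symm
  generalize Real.sqrt k = s at *
  subst hk'
  have h0 : 0 < Real.log s := Real.log_pos hs
  have h1 := Real.self_lt_sinh_iff.2 h0
  rw [Real.sinh_log (by linarith)] at h1
  have h2 : 2 * Real.log s * s < s ^ 2 - 1 := by
    have : (s - s⁻¹) * s = s ^ 2 - 1 := by field_simp
    nlinarith
  have h3 : 0 < 2 * Real.log s * s := by positivity
  rw [Real.log_pow]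
  push_cast
  nlinarith

lemma one_lt_M {k : ℝ} (hk : 1 < k) : 1 < M k := by
  have h0 := Real.log_pos hk
  have := Real.log_lt_sub_one_of_pos (by linarith : 0 < k) hk.ne'
  rw [M, lt_div_iff₀ h0]; linarith

lemma M_lt {k : ℝ} (hk : 1 < k) : M k < k := by
  have h0 := Real.log_pos hk
  have := Real.log_lt_sub_one_of_pos (by positivity : 0 < k⁻¹) (by simpa using hk.ne')
  rw [Real.log_inv] at this
  have h2 : k * k⁻¹ = 1 := mul_inv_cancel₀ (by linarith)
  rw [M, div_lt_iff₀ h0]; nlinarith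

lemma M_mono {a b : ℝ} (ha : 1 < a) (hab : a ≤ b) : M a ≤ M b := by
  have h := strictConcaveOn_log_Ioi.concaveOn.neg.secant_mono (a := 1) (x := a) (y := b)
    (by simp) (by simp; linarith) (by simp; linarith) ha.ne' (by linarith) hab
  have h0 := Real.log_pos ha
  have h0' := Real.log_pos (by linarith : 1 < b)
  simp only [Pi.neg_apply, Real.log_one, neg_zero, sub_zero, neg_div, neg_le_neg_iff] at h
  rw [M, M, div_le_div_iff₀ h0 h0']
  rw [div_le_div_iff₀ (by linarith) (by linarith)] at h
  linarith

/-- The chord slopes of `M` from `(1, 1)` decrease: the part of the concavity of `M` that is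
needed. -/
lemma slope_M_anti {a b : ℝ} (ha : 1 < a) (hab : a ≤ b) :
    (M b - 1) / (b - 1) ≤ (M a - 1) / (a - 1) := by
  have key : AntitoneOn (fun k : ℝ => (Real.log k)⁻¹ - (k - 1)⁻¹) (Set.Ioi 1) := by
    have hd : ∀ k ∈ Set.Ioi (1 : ℝ), HasDerivAt (fun k : ℝ => (Real.log k)⁻¹ - (k - 1)⁻¹)
        (-k⁻¹ / Real.log k ^ 2 - -1 / (k - 1) ^ 2) k := by
      intro k (hk : 1 < k)
      exact ((Real.hasDerivAt_log (by linarith)).inv (Real.log_pos hk).ne').sub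
        (((hasDerivAt_id k).sub_const 1).inv (by simp; linarith))
    refine antitoneOn_of_deriv_nonpos (convex_Ioi 1)
      (fun k hk => (hd k hk).continuousAt.continuousWithinAt)
      (fun k hk => (hd k (interior_subset hk)).differentiableAt.differentiableWithinAt) ?_
    intro k hk
    have hk' : 1 < k := interior_subset hk
    rw [(hd k hk').deriv]
    have h0 := Real.log_pos hk'
    have h1 := mul_log_sq_lt hk'
    have h2 : 1 / (k - 1) ^ 2 ≤ 1 / (k * Real.log k ^ 2) :=
      one_div_le_one_div_of_le (by positivity) h1.le
    have h3 : -k⁻¹ / Real.log k ^ 2 = - (1 / (k * Real.log k ^ 2)) := by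
      field_simp
    rw [h3, neg_div]; linarith
  have h := key (Set.mem_Ioi.2 ha) (Set.mem_Ioi.2 (by linarith)) hab
  have conv : ∀ k : ℝ, 1 < k → (M k - 1) / (k - 1) = (Real.log k)⁻¹ - (k - 1)⁻¹ := by
    intro k hk
    have h0 := Real.log_pos hk
    have : k - 1 ≠ 0 := by linarith
    rw [M]; field_simp
  rw [conv a ha, conv b (by linarith)]
  exact h

/-! ### The scalar equation for `k = x₂/x₁` -/

/-- Once the ratio `J l` is at most `1` it keeps decreasing: it is a concave function of `k` whose
limit at `k = 1` is `1/l - 2 > 1`. -/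
lemma J_lt {l a b : ℝ} (hl : 0 < l) (hl3 : 3 * l < 1) (ha : 1 < a) (hab : a < b)
    (hJ : J l a ≤ 1) : J l b < J l a := by
  have h := slope_M_anti ha hab.le
  have ea : M a = (M a - 1) / (a - 1) * (a - 1) + 1 := by
    rw [div_mul_cancel₀ _ (by linarith)]; ring
  have eb : M b = (M b - 1) / (b - 1) * (b - 1) + 1 := by
    rw [div_mul_cancel₀ _ (by linarith)]; ring
  generalize (M a - 1) / (a - 1) = na at *
  generalize (M b - 1) / (b - 1) = nb at *
  have e : ∀ k n, J l k = (n * (k - 1) + 1) / l - 1 - k →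
      J l k * l = (k - 1) * (n - l) + (1 - 2 * l) := by
    intro k n h
    rw [h]; field_simp; ring
  have e1 := e a na (by rw [J, ← ea])
  have e2 := e b nb (by rw [J, ← eb])
  have h1 : (a - 1) * (na - l) < 0 := by nlinarith
  have h2 : na - l < 0 := by nlinarith
  have h3 : (b - 1) * (nb - l) < (a - 1) * (na - l) := by nlinarith
  nlinarith

/-- `log j + (1 - j)/m` increases strictly with `j ≤ 1` and decreases with `m > 1`. -/
lemma H_lt {j j' m m' : ℝ} (hj' : 0 < j') (hjj : j' < j) (hj : j ≤ 1) (hm : 1 < m)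
    (hmm : m ≤ m') : Real.log j' + (1 - j') / m' < Real.log j + (1 - j) / m := by
  have h1 := Real.log_lt_sub_one_of_pos (div_pos hj' (hj'.trans hjj))
    (by rw [Ne, div_eq_one_iff_eq (by linarith)]; exact hjj.ne)
  rw [Real.log_div hj'.ne' (by linarith)] at h1
  have h2 : (1 - j') / m' ≤ (1 - j') / m := by gcongr; linarith
  have h3 : (1 - j') / m - (1 - j) / m ≤ j - j' := by
    rw [← sub_div, div_le_iff₀ (by linarith)]; nlinarith
  have h4 : j' / j - 1 ≤ -(j - j') := by
    have : j' / j * j = j' := div_mul_cancel₀ _ (by linarith)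
    rw [div_sub_one (by linarith), div_le_iff₀ (by linarith)]; nlinarith
  linarith

lemma exists_k {l R : ℝ} (hl : 0 < l) (hl3 : 3 * l < 1) (hR : 0 < R) :
    ∃ k, 1 < k ∧ 0 < J l k ∧ J l k ≤ 1 ∧ Real.log (J l k) + R + (1 - J l k) / M k = 0 := by
  have hcM : ContinuousOn M (Set.Ioi 1) := by
    unfold M
    exact (continuousOn_id.sub continuousOn_const).div
      (Real.continuousOn_log.mono (fun k (hk : 1 < k) => by simp; linarith))
      (fun k hk => (Real.log_pos hk).ne')
  have hcJ : ContinuousOn (J l) (Set.Ioi 1) := by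
    unfold J
    exact ((hcM.div_const l).sub continuousOn_const).sub continuousOn_id
  -- `J l` is at least `1` at `1/l - 2` because `M ≥ 1`, and negative at `exp (1/l)`.
  have hl' : 3 < 1 / l := by rw [lt_div_iff₀ hl]; linarith
  have ha : 1 < 1 / l - 2 := by linarith
  have hb0 : 1 / l - 2 ≤ Real.exp (1 / l) := by linarith [Real.add_one_le_exp (1 / l)]
  have hJa : 1 ≤ J l (1 / l - 2) := by
    have : 1 / l < M (1 / l - 2) / l := by gcongr; exact one_lt_M ha
    rw [J]; linarith
  have hJb : J l (Real.exp (1 / l)) < 0 := by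
    rw [J, M, Real.log_exp]
    have : (Real.exp (1 / l) - 1) / (1 / l) / l = Real.exp (1 / l) - 1 := by field_simp
    rw [this]; linarith
  obtain ⟨k₁, hk₁, hJ₁⟩ := intermediate_value_Icc' hb0
    (hcJ.mono (fun x hx => lt_of_lt_of_le ha hx.1)) (show (1 : ℝ) ∈ _ from ⟨by linarith, hJa⟩)
  have hk1 : 1 < k₁ := lt_of_lt_of_le ha hk₁.1
  -- The exponentiated equation `J * exp (R + (1 - J)/M) = 1` is continuous across `J = 0`.
  obtain ⟨k, hk, hE⟩ := intermediate_value_Icc' hk₁.2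
    (f := fun k => J l k * Real.exp (R + (1 - J l k) / M k))
    (ContinuousOn.mono (s := Set.Ioi 1) (hcJ.mul (Real.continuous_exp.comp_continuousOn
        (continuousOn_const.add ((continuousOn_const.sub hcJ).div hcM
          (fun k hk => (zero_lt_one.trans (one_lt_M hk)).ne')))))
      (fun x hx => lt_of_lt_of_le hk1 hx.1))
    (show (1 : ℝ) ∈ _ from ⟨by nlinarith [Real.exp_pos (R + (1 - J l (Real.exp (1 / l))) /
      M (Real.exp (1 / l)))], by simp [hJ₁, hR.le]⟩)
  have hk' : 1 < k := lt_of_lt_of_le hk1 hk.1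
  simp only at hE
  have hJpos : 0 < J l k := by
    by_contra h
    nlinarith [Real.exp_pos (R + (1 - J l k) / M k)]
  refine ⟨k, hk', hJpos, ?_, ?_⟩
  · rcases hk.1.eq_or_lt with h | h
    · rw [← h, hJ₁]
    · exact hJ₁ ▸ (J_lt hl hl3 hk1 h hJ₁.le).le
  · have := congrArg Real.log hE
    rw [Real.log_mul hJpos.ne' (Real.exp_pos _).ne', Real.log_exp, Real.log_one] at this
    linarith


/-! ### Solutions of the critical point equations -/

/-- The constraints on `(x₀, x₁, x₂)`, with the two `G`-equations multiplied by `β`;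
here `l = 2/(3β)` and `R = 3rβ/2`. -/
structure Sol (l R x₀ x₁ x₂ : ℝ) : Prop where
  pos₀ : 0 < x₀
  le₀ : x₀ ≤ l
  pos₁ : 0 < x₁
  le₁ : x₁ ≤ l
  le₂ : l ≤ x₂
  sum : x₀ + x₁ + x₂ = 1
  log₀ : Real.log x₀ + R - Real.log x₁ = (x₀ - x₁) / l
  log₂ : Real.log x₂ - Real.log x₁ = (x₂ - x₁) / l

lemma Sol.strict {l R x₀ x₁ x₂ : ℝ} (hl : 0 < l) (hl3 : 3 * l < 1) (hR : 0 < R)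
    (h : Sol l R x₀ x₁ x₂) : x₀ < x₁ ∧ x₁ < l ∧ l < x₂ ∧ x₁ * x₂ < l ^ 2 := by
  obtain ⟨p0, l0, p1, l1, l2, hs, e0, e2⟩ := h
  have p2 : 0 < x₂ := by linarith
  have h12 : x₁ < x₂ := by
    by_contra hc
    linarith
  have h01 : x₀ < x₁ := by
    by_contra! hc
    have h1 := Real.log_le_sub_one_of_pos (div_pos p1 p0)
    rw [Real.log_div p1.ne' p0.ne'] at h1
    have h2 : (x₀ - x₁) / l ≤ (x₀ - x₁) / x₀ := by gcongr
    have h3 : (x₀ - x₁) / x₀ = 1 - x₁ / x₀ := by field_simp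
    linarith
  have hk : 1 < x₂ / x₁ := by rwa [one_lt_div p1]
  have hlog : Real.log (x₂ / x₁) = (x₂ - x₁) / l := by rw [Real.log_div p2.ne' p1.ne', e2]
  have hM : M (x₂ / x₁) = l / x₁ := by
    have : x₂ - x₁ ≠ 0 := by linarith
    rw [M, hlog]; field_simp
  have a1 := one_lt_M hk
  have a2 := M_lt hk
  have a3 := mul_log_sq_lt hk
  rw [hM] at a1 a2
  rw [one_lt_div p1] at a1
  rw [div_lt_div_iff_of_pos_right p1] at a2
  refine ⟨h01, a1, a2, ?_⟩
  have hd : 0 < (x₂ - x₁) ^ 2 := pow_pos (by linarith) 2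
  rw [hlog, div_pow] at a3
  have e3 : (x₂ / x₁ - 1) ^ 2 = (x₂ - x₁) ^ 2 / x₁ ^ 2 := by field_simp
  rw [e3, div_mul_div_comm, div_lt_div_iff₀ (by positivity) (by positivity)] at a3
  have : (x₂ - x₁) ^ 2 * x₁ * (x₁ * x₂) < (x₂ - x₁) ^ 2 * x₁ * l ^ 2 := by nlinarith
  exact lt_of_mul_lt_mul_left this (by positivity)

lemma Sol.ratio {l R x₀ x₁ x₂ : ℝ} (hl : 0 < l) (hl3 : 3 * l < 1) (hR : 0 < R)
    (h : Sol l R x₀ x₁ x₂) :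
    1 < x₂ / x₁ ∧ x₁ = l / M (x₂ / x₁) ∧ x₀ = J l (x₂ / x₁) * x₁ ∧ J l (x₂ / x₁) ≤ 1 ∧
      Real.log (J l (x₂ / x₁)) + (1 - J l (x₂ / x₁)) / M (x₂ / x₁) = -R := by
  obtain ⟨h01, h1l, hl2, -⟩ := h.strict hl hl3 hR
  obtain ⟨p0, l0, p1, l1, l2, hs, e0, e2⟩ := h
  have p2 : 0 < x₂ := by linarith
  have hk : 1 < x₂ / x₁ := by rw [one_lt_div p1]; linarith
  have hlog : Real.log (x₂ / x₁) = (x₂ - x₁) / l := by rw [Real.log_div p2.ne' p1.ne', e2]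
  have hM : M (x₂ / x₁) = l / x₁ := by
    have : x₂ - x₁ ≠ 0 := by linarith
    rw [M, hlog]; field_simp
  have hJ : J l (x₂ / x₁) = x₀ / x₁ := by
    rw [J, hM, show x₀ = 1 - x₁ - x₂ by linarith]; field_simp
  refine ⟨hk, ?_, ?_, ?_, ?_⟩
  · rw [hM]; field_simp
  · rw [hJ]; field_simp
  · rw [hJ, div_le_one p1]; exact h01.le
  · have : (1 - x₀ / x₁) / (l / x₁) = -((x₀ - x₁) / l) := by field_simp; ring
    rw [hJ, hM, Real.log_div p0.ne' p1.ne', this, ← e0]; ring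

lemma Sol.ratio_not_lt {l R x₀ x₁ x₂ y₀ y₁ y₂ : ℝ} (hl : 0 < l) (hl3 : 3 * l < 1) (hR : 0 < R)
    (hx : Sol l R x₀ x₁ x₂) (hy : Sol l R y₀ y₁ y₂) : ¬ x₂ / x₁ < y₂ / y₁ := by
  intro hlt
  obtain ⟨k1, -, -, j1, e⟩ := hx.ratio hl hl3 hR
  obtain ⟨k1', -, j0', -, e'⟩ := hy.ratio hl hl3 hR
  have hj' : 0 < J l (y₂ / y₁) := by
    have := hy.pos₀
    rw [j0'] at this
    exact pos_of_mul_pos_left this hy.pos₁.le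
  have := H_lt hj' (J_lt hl hl3 k1 hlt j1) j1 (one_lt_M k1) (M_mono k1 hlt.le)
  linarith

lemma Sol.unique {l R x₀ x₁ x₂ y₀ y₁ y₂ : ℝ} (hl : 0 < l) (hl3 : 3 * l < 1) (hR : 0 < R)
    (hx : Sol l R x₀ x₁ x₂) (hy : Sol l R y₀ y₁ y₂) : x₁ = y₁ ∧ x₂ = y₂ := by
  have hk : x₂ / x₁ = y₂ / y₁ :=
    le_antisymm (not_lt.1 (hy.ratio_not_lt hl hl3 hR hx)) (not_lt.1 (hx.ratio_not_lt hl hl3 hR hy))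
  have h1 : x₁ = y₁ := by
    rw [(hx.ratio hl hl3 hR).2.1, hk]
    exact (hy.ratio hl hl3 hR).2.1.symm
  refine ⟨h1, ?_⟩
  have := hy.pos₁
  rw [h1, div_left_inj' this.ne'] at hk
  exact hk

lemma exists_sol {l R : ℝ} (hl : 0 < l) (hl3 : 3 * l < 1) (hR : 0 < R) :
    ∃ x₀ x₁ x₂, Sol l R x₀ x₁ x₂ := by
  obtain ⟨k, hk, hJ0, hJ1, hE⟩ := exists_k hl hl3 hR
  have hM := one_lt_M hk
  have hM0 : 0 < M k := by linarith
  have hMk := M_lt hk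
  have hlog := Real.log_pos hk
  have hu : 0 < l / M k := by positivity
  have hul : l / M k ≤ l := div_le_self hl.le hM.le
  refine ⟨J l k * (l / M k), l / M k, k * (l / M k), by positivity, by nlinarith, hu, hul, ?_, ?_,
    ?_, ?_⟩
  · rw [← mul_div_assoc, le_div_iff₀ hM0]; nlinarith
  · rw [J]; field_simp; ring
  · rw [Real.log_mul hJ0.ne' hu.ne']
    have : (J l k * (l / M k) - l / M k) / l = -((1 - J l k) / M k) := by field_simp; ring
    rw [this]; linarith
  · rw [Real.log_mul (by linarith) hu.ne']
    have h1 : k - 1 ≠ 0 := by linarith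
    have : (k * (l / M k) - l / M k) / l = Real.log k := by
      rw [M]; field_simp
    rw [this]; ring

/-! ### The local minimum -/

/-- On `x₀ + x₁ + x₂ = 1` one has `|ψ|² = (3(x₀² + x₁² + x₂²) - 1)/2`, so the potential
separates. -/
lemma potFpi_eq (β r : ℝ) (x : ℝ × ℝ) :
    potFpi β r x = ((1 / β) * (x.1 * Real.log (3 * x.1)) - 3 / 4 * x.1 ^ 2)
      + ((1 / β) * (x.2 * Real.log (3 * x.2)) - 3 / 4 * x.2 ^ 2)
      + ((1 / β) * ((1 - x.1 - x.2) * Real.log (3 * (1 - x.1 - x.2))) - 3 / 4 * (1 - x.1 - x.2) ^ 2)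
      + 1 / 4 - r / 2 + 3 * r / 2 * (1 - x.1 - x.2) := by
  have c1 : (potV 1).1 = -(1 / 2) := by
    have : 2 * Real.pi * ((1 : ℕ) : ℝ) / 3 = Real.pi - Real.pi / 3 := by push_cast; ring
    rw [potV, this, Real.cos_pi_sub, Real.cos_pi_div_three]
  have s1 : (potV 1).2 = Real.sqrt 3 / 2 := by
    have : 2 * Real.pi * ((1 : ℕ) : ℝ) / 3 = Real.pi - Real.pi / 3 := by push_cast; ring
    rw [potV, this, Real.sin_pi_sub, Real.sin_pi_div_three]
  have c2 : (potV 2).1 = -(1 / 2) := by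
    have : 2 * Real.pi * ((2 : ℕ) : ℝ) / 3 = Real.pi / 3 + Real.pi := by push_cast; ring
    rw [potV, this, Real.cos_add_pi, Real.cos_pi_div_three]
  have s2 : (potV 2).2 = -(Real.sqrt 3 / 2) := by
    have : 2 * Real.pi * ((2 : ℕ) : ℝ) / 3 = Real.pi / 3 + Real.pi := by push_cast; ring
    rw [potV, this, Real.sin_add_pi, Real.sin_pi_div_three]
  have h3 : Real.sqrt 3 ^ 2 = 3 := Real.sq_sqrt (by norm_num)
  simp only [potFpi, potF, potPsi, potS, c1, c2, s1, s2]
  linear_combination (-(1 / 2) * (1 / 4) * (x.1 - x.2) ^ 2) * h3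

/-- Second-order lower bound for the one-variable summand `(1/β) x log(3x) - (3/4) x²` of the
potential, for every `κ` below its second derivative. -/
lemma eventually_taylor (β x κ : ℝ) (hx : 0 < x) (hκ : κ < 1 / (β * x) - 3 / 2) :
    ∀ᶠ y in nhds x, (1 / β) * (x * Real.log (3 * x)) - 3 / 4 * x ^ 2
      + (Gfun β x + (1 / β) * (Real.log 3 + 1)) * (y - x) + κ / 2 * (y - x) ^ 2
      ≤ (1 / β) * (y * Real.log (3 * y)) - 3 / 4 * y ^ 2 := by
  set A := Gfun β x + (1 / β) * (Real.log 3 + 1) with hA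
  let g : ℝ → ℝ := fun y => (1 / β) * (y * Real.log (3 * y)) - 3 / 4 * y ^ 2
    - A * (y - x) - κ / 2 * (y - x) ^ 2
  let g' : ℝ → ℝ := fun y => (1 / β) * (Real.log (3 * y) + 1) - 3 / 2 * y - A - κ * (y - x)
  have hlog : ∀ y : ℝ, 0 < y → HasDerivAt (fun y => Real.log (3 * y)) (1 / y) y := by
    intro y hy
    have := ((hasDerivAt_id y).const_mul 3).log (by simp; linarith)
    refine this.congr_deriv ?_
    simp only [id]; field_simp
  have hg : ∀ y : ℝ, 0 < y → HasDerivAt g (g' y) y := by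
    intro y hy
    have := (((((hasDerivAt_id y).mul (hlog y hy)).const_mul (1 / β)).sub
      (((hasDerivAt_id y).pow 2).const_mul (3 / 4))).sub
      (((hasDerivAt_id y).sub_const x).const_mul A)).sub
      ((((hasDerivAt_id y).sub_const x).pow 2).const_mul (κ / 2))
    refine HasDerivAt.congr_deriv (f := g) this ?_
    simp only [g', id]
    field_simp
    push_cast
    ring
  have hg' : HasDerivAt g' ((1 / β) * (1 / x) - 3 / 2 - κ) x := by
    have := (((((hlog x hx).add_const 1).const_mul (1 / β)).sub
      ((hasDerivAt_id x).const_mul (3 / 2))).sub_const A).sub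
      (((hasDerivAt_id x).sub_const x).const_mul κ)
    refine HasDerivAt.congr_deriv (f := g') this ?_
    ring
  have hd : deriv g =ᶠ[nhds x] g' := by
    filter_upwards [lt_mem_nhds hx] with y hy using (hg y hy).deriv
  have hmin : IsLocalMin g x := by
    apply isLocalMin_of_deriv_deriv_pos
    · rw [hd.deriv_eq, hg'.deriv]
      have : (1 / β) * (1 / x) = 1 / (β * x) := by rw [one_div_mul_one_div]
      linarith
    · rw [hd.eq_of_nhds]
      simp only [g', hA, Gfun, Real.log_mul (by norm_num : (3 : ℝ) ≠ 0) hx.ne']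
      ring
    · exact (hg x hx).continuousAt
  filter_upwards [hmin] with y hy
  simp only [g, sub_self] at hy
  linarith

/-- A diagonal quadratic form positive definite on the plane of zero-sum vectors stays nonnegative
there when its coefficients are lowered slightly. -/
lemma exists_eps {a b c : ℝ} (ha : 0 < a) (hb : 0 < b) (hdet : 0 < a * b + a * c + b * c) :
    ∃ ε > 0, ∀ s t : ℝ, 0 ≤ (a - ε) * s ^ 2 + (b - ε) * t ^ 2 + (c - ε) * (s + t) ^ 2 := by
  have hac : 0 < a + c := by nlinarith
  have h1 : ∀ᶠ ε : ℝ in nhds 0, 0 < (a - ε) + (c - ε) := by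
    apply (by fun_prop : Continuous fun ε : ℝ => (a - ε) + (c - ε)).continuousAt.eventually
    apply lt_mem_nhds
    simpa using hac
  have h2 : ∀ᶠ ε : ℝ in nhds 0,
      0 < (a - ε) * (b - ε) + (a - ε) * (c - ε) + (b - ε) * (c - ε) := by
    apply (by fun_prop : Continuous fun ε : ℝ =>
      (a - ε) * (b - ε) + (a - ε) * (c - ε) + (b - ε) * (c - ε)).continuousAt.eventually
    apply lt_mem_nhds
    simpa using hdet
  obtain ⟨ε, ⟨h1, h2⟩, hε⟩ := (((h1.and h2).filter_mono nhdsWithin_le_nhds).and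
    (self_mem_nhdsWithin (a := (0 : ℝ)) (s := Set.Ioi 0))).exists
  refine ⟨ε, hε, fun s t => ?_⟩
  generalize a - ε = a at *
  generalize b - ε = b at *
  generalize c - ε = c at *
  have : (a + c) * (a * s ^ 2 + b * t ^ 2 + c * (s + t) ^ 2)
      = ((a + c) * s + c * t) ^ 2 + (a * b + a * c + b * c) * t ^ 2 := by ring
  refine nonneg_of_mul_nonneg_right (a := a + c) ?_ h1
  rw [this]; positivity

/-- Up to the factor `(3/2)²`, positivity of `D₀D₁ + D₀D₂ + D₁D₂` for `Dᵢ = (3/2)(l - xᵢ)/xᵢ`. -/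
lemma det_pos {l x₀ x₁ x₂ : ℝ} (p0 : 0 < x₀) (p1 : 0 < x₁) (p2 : 0 < x₂) (h01 : x₀ < x₁)
    (h1l : x₁ < l) (hprod : x₁ * x₂ < l ^ 2) (hs : 3 * l < x₀ + x₁ + x₂) :
    0 < (l - x₀) / x₀ * ((l - x₁) / x₁) + (l - x₀) / x₀ * ((l - x₂) / x₂)
      + (l - x₁) / x₁ * ((l - x₂) / x₂) := by
  have e : (l - x₀) / x₀ * ((l - x₁) / x₁) + (l - x₀) / x₀ * ((l - x₂) / x₂)
    + (l - x₁) / x₁ * ((l - x₂) / x₂) = ((l - x₀) * (l * (x₁ + x₂) - 2 * (x₁ * x₂))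
      - x₀ * ((l - x₁) * (x₂ - l))) / (x₀ * x₁ * x₂) := by
    field_simp; ring
  rw [e]
  apply div_pos _ (by positivity)
  have q1 : 3 * (x₁ * x₂) < l * (2 * x₁ + x₂) := by nlinarith
  have q2 : 0 < x₁ * (x₂ - l) := mul_pos p1 (by linarith)
  have q3 : 0 < l * (x₁ + x₂) - 2 * (x₁ * x₂) := by nlinarith
  have q4 : (l - x₁) * (l * (x₁ + x₂) - 2 * (x₁ * x₂)) ≤
    (l - x₀) * (l * (x₁ + x₂) - 2 * (x₁ * x₂)) := by gcongr
  have q5 : x₀ * ((l - x₁) * (x₂ - l)) ≤ x₁ * ((l - x₁) * (x₂ - l)) :=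
    mul_le_mul_of_nonneg_right h01.le (mul_nonneg (by linarith) (by linarith))
  have q6 : 0 < (l - x₁) * (l * (2 * x₁ + x₂) - 3 * (x₁ * x₂)) :=
    mul_pos (by linarith) (by linarith)
  nlinarith

lemma isLocalMin_of_sol {β r l R : ℝ} {p : ℝ × ℝ} (hβ : 0 < β) (hl : l = 2 / (3 * β))
    (hl3 : 3 * l < 1) (hR : 0 < R) (h : Sol l R (1 - p.1 - p.2) p.1 p.2)
    (hG0 : Gfun β (1 - p.1 - p.2) + 3 * r / 2 = Gfun β p.1) (hG2 : Gfun β p.1 = Gfun β p.2) :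
    IsLocalMin (potFpi β r) p := by
  have hl0 : 0 < l := by rw [hl]; positivity
  obtain ⟨h01, h1l, hl2, hprod⟩ := h.strict hl0 hl3 hR
  have p0 := h.pos₀
  have p1 := h.pos₁
  have p2 : 0 < p.2 := by linarith
  have hs := h.sum
  obtain ⟨x₁, x₂⟩ := p
  simp only at *
  obtain ⟨x₀, hx₀⟩ : ∃ x₀, x₀ = 1 - x₁ - x₂ := ⟨_, rfl⟩
  rw [← hx₀] at h01 p0 hs hG0
  have hD : ∀ x, 0 < x → 1 / (β * x) - 3 / 2 = 3 / 2 * ((l - x) / x) := by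
    intro x hx; rw [hl]; field_simp
  have hdet := det_pos p0 p1 p2 h01 h1l hprod (by linarith)
  obtain ⟨ε, hε, hq⟩ := exists_eps (a := 1 / (β * x₀) - 3 / 2) (b := 1 / (β * x₁) - 3 / 2)
    (c := 1 / (β * x₂) - 3 / 2)
    (by rw [hD _ p0]; have := div_pos (by linarith : 0 < l - x₀) p0; positivity)
    (by rw [hD _ p1]; have := div_pos (by linarith : 0 < l - x₁) p1; positivity)
    (by rw [hD _ p0, hD _ p1, hD _ p2]; nlinarith)
  have t0 := eventually_taylor β x₀ (1 / (β * x₀) - 3 / 2 - ε) p0 (by linarith)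
  have t1 := eventually_taylor β x₁ (1 / (β * x₁) - 3 / 2 - ε) p1 (by linarith)
  have t2 := eventually_taylor β x₂ (1 / (β * x₂) - 3 / 2 - ε) p2 (by linarith)
  have c0 : Filter.Tendsto (fun y : ℝ × ℝ => 1 - y.1 - y.2) (nhds (x₁, x₂)) (nhds x₀) := by
    rw [hx₀]
    exact (by fun_prop : Continuous fun y : ℝ × ℝ => 1 - y.1 - y.2).tendsto (x₁, x₂)
  have c1 : Filter.Tendsto (fun y : ℝ × ℝ => y.1) (nhds (x₁, x₂)) (nhds x₁) :=
    continuous_fst.tendsto (x₁, x₂)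
  have c2 : Filter.Tendsto (fun y : ℝ × ℝ => y.2) (nhds (x₁, x₂)) (nhds x₂) :=
    continuous_snd.tendsto (x₁, x₂)
  filter_upwards [c0.eventually t0, c1.eventually t1, c2.eventually t2] with y b0 b1 b2
  rw [potFpi_eq, potFpi_eq]
  simp only
  rw [← hx₀]
  have hq' := hq (1 - y.1 - y.2 - x₀) (y.1 - x₁)
  have es : (1 - y.1 - y.2 - x₀) + (y.1 - x₁) = -(y.2 - x₂) := by linarith
  rw [es, neg_sq] at hq'
  rw [← hG2] at b2
  have hG0' : Gfun β x₀ = Gfun β x₁ - 3 * r / 2 := by linarith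
  rw [hG0'] at b0
  generalize Gfun β x₁ = c at *
  -- The first-order terms cancel, as the increments add up to `0`.
  have lin : (c + (1 / β) * (Real.log 3 + 1)) *
      ((1 - y.1 - y.2 - x₀) + (y.1 - x₁) + (y.2 - x₂)) = 0 := by
    rw [es]; ring
  linarith [b0, b1, b2, hq', lin]

lemma sol_of_eqs {β r : ℝ} {p : ℝ × ℝ} (hβ : 0 < β)
    (h1 : 0 < p.1) (h2 : p.1 ≤ 2 / (3 * β)) (h3 : 2 / (3 * β) ≤ p.2)
    (h4 : 0 < 1 - p.1 - p.2) (h5 : 1 - p.1 - p.2 ≤ 2 / (3 * β))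
    (hG0 : Gfun β (1 - p.1 - p.2) + 3 * r / 2 = Gfun β p.1) (hG2 : Gfun β p.1 = Gfun β p.2) :
    Sol (2 / (3 * β)) (3 * r * β / 2) (1 - p.1 - p.2) p.1 p.2 := by
  refine ⟨h4, h5, h1, h2, h3, by ring, ?_, ?_⟩
  all_goals
    simp only [Gfun] at hG0 hG2
    field_simp at hG0 hG2 ⊢
    linarith

lemma eqs_of_sol {β r x₀ x₁ x₂ : ℝ} (hβ : 0 < β)
    (h : Sol (2 / (3 * β)) (3 * r * β / 2) x₀ x₁ x₂) :
    Gfun β x₀ + 3 * r / 2 = Gfun β x₁ ∧ Gfun β x₁ = Gfun β x₂ := by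
  have e0 := h.log₀
  have e2 := h.log₂
  simp only [Gfun]
  field_simp at e0 e2 ⊢
  constructor <;> linarith

end Potts

/-- for `β > 2` and `r > 0` there is exactly one pair `(x₁,x₂)` with
`0 < x₁ ≤ l_β ≤ x₂`, `x₁ + x₂ < 1`, `0 < x₀ ≤ l_β` and
`G_β(x₀) + 3r/2 = G_β(x₁) = G_β(x₂)`; moreover it satisfies the strict inequalities
`x₀ < l_β`, `x₁ < l_β < x₂` and is a local minimum of `F_β(·,r)` with `θ_e = π`. -/
theorem potts_external_field_pi_unique_asymmetric_minimum (β r : ℝ)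
    (hβ : 2 < β) (hr : 0 < r) :
    (∃! p : ℝ × ℝ,
      0 < p.1 ∧ p.1 ≤ 2 / (3 * β) ∧ 2 / (3 * β) ≤ p.2 ∧ p.1 + p.2 < 1 ∧
      0 < 1 - p.1 - p.2 ∧ 1 - p.1 - p.2 ≤ 2 / (3 * β) ∧
      Gfun β (1 - p.1 - p.2) + 3 * r / 2 = Gfun β p.1 ∧ Gfun β p.1 = Gfun β p.2) ∧
    (∀ p : ℝ × ℝ,
      0 < p.1 → p.1 ≤ 2 / (3 * β) → 2 / (3 * β) ≤ p.2 → p.1 + p.2 < 1 →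
      0 < 1 - p.1 - p.2 → 1 - p.1 - p.2 ≤ 2 / (3 * β) →
      Gfun β (1 - p.1 - p.2) + 3 * r / 2 = Gfun β p.1 → Gfun β p.1 = Gfun β p.2 →
      1 - p.1 - p.2 < 2 / (3 * β) ∧ p.1 < 2 / (3 * β) ∧ 2 / (3 * β) < p.2 ∧
      IsLocalMin (potFpi β r) p) := by
  have hβ0 : 0 < β := by linarith
  have hl : 0 < 2 / (3 * β) := by positivity
  have hl3 : 3 * (2 / (3 * β)) < 1 := by
    have : 3 * (2 / (3 * β)) = 2 / β := by field_simp
    rw [this, div_lt_one hβ0]; exact hβ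
  have hR : 0 < 3 * r * β / 2 := by positivity
  refine ⟨?_, ?_⟩
  · obtain ⟨x₀, x₁, x₂, h⟩ := Potts.exists_sol hl hl3 hR
    obtain ⟨g0, g2⟩ := Potts.eqs_of_sol hβ0 h
    have e : 1 - x₁ - x₂ = x₀ := by linarith [h.sum]
    have h0 := h.pos₀
    refine ⟨(x₁, x₂), ?_, ?_⟩
    · simp only [e]
      exact ⟨h.pos₁, h.le₁, h.le₂, by linarith, h0, h.le₀, g0, g2⟩
    · rintro p ⟨a1, a2, a3, -, a5, a6, a7, a8⟩
      obtain ⟨b1, b2⟩ := (Potts.sol_of_eqs hβ0 a1 a2 a3 a5 a6 a7 a8).unique hl hl3 hR h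
      exact Prod.ext b1 b2
  · intro p a1 a2 a3 _ a5 a6 a7 a8
    have h := Potts.sol_of_eqs hβ0 a1 a2 a3 a5 a6 a7 a8
    obtain ⟨b0, b1, b2, -⟩ := h.strict hl hl3 hR
    exact ⟨b0.trans b1, b1, b2, Potts.isLocalMin_of_sol hβ0 rfl hl3 hR h a7 a8⟩
end
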